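/- Let n ≥ 3, let A ⊆ M_n(ℂ) be a block upper-triangular subalgebra, and let φ : A → A be a continuous injective map which preserves commutativity and shrinks the spectrum, i.e. σ(φ(X)) ⊆ σ(X) for all X ∈ A. Then one of the following holds: (a) there exists an invertible T ∈ A such that φ(X) = T X T⁻¹ for all X ∈ A; or (b) A^⊙ = A and there exists an invertible T ∈ A such that φ(X) = T X^⊙ T⁻¹ for all X ∈ A, where X^⊙ := J Xᵗ J and J is the exchange matrix (J_{ij} = 1 iff i + j = n + 1). -/

import Mathlib

open Matrix

noncomputable section

/-- The block index function: `blockIdx k i` is the index `s` (0-based) of the diagonal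
block containing row/column `i`, for block sizes given by the list `k`. -/
def blockIdx (k : List ℕ) (i : ℕ) : ℕ :=
  ((Finset.range k.length).filter (fun s => (k.take (s + 1)).sum ≤ i)).card

/-- The block upper-triangular algebra `𝒜_{k₁,…,k_r} ⊆ M_n(ℂ)` determined by the
list of block sizes `k`. -/
def blockAlg (n : ℕ) (k : List ℕ) : Set (Matrix (Fin n) (Fin n) ℂ) :=
  { X | ∀ i j : Fin n, blockIdx k (j : ℕ) < blockIdx k (i : ℕ) → X i j = 0 }

/-- A subset of `M_n(ℂ)` is a block upper-triangular subalgebra if it is of the form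
`blockAlg n k` for some list `k` of positive integers summing to `n`. -/
def IsBlockUT (n : ℕ) (𝒜 : Set (Matrix (Fin n) (Fin n) ℂ)) : Prop :=
  ∃ k : List ℕ, (∀ m ∈ k, 0 < m) ∧ k.sum = n ∧ 𝒜 = blockAlg n k

/-- The exchange matrix `J` (ones on the antidiagonal). -/
def exchMat (n : ℕ) : Matrix (Fin n) (Fin n) ℂ :=
  Matrix.of fun i j => if (i : ℕ) + (j : ℕ) + 1 = n then 1 else 0

section Part1
open Metric Set MeasureTheory Filter Topology

section Topo
variable {E : Type*} [NormedAddCommGroup E] [InnerProductSpace ℝ E] [FiniteDimensional ℝ E]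

theorem detPoly (A : E →L[ℝ] E) : ∃ q : Polynomial ℝ, q.natDegree ≤ Module.finrank ℝ E ∧
    ∀ t : ℝ, q.eval t = (ContinuousLinearMap.id ℝ E + t • A).det := by
  let B := Module.finBasis ℝ E
  let M := LinearMap.toMatrix B B (A : E →ₗ[ℝ] E)
  refine ⟨Matrix.det ((Polynomial.X : Polynomial ℝ) • M.map Polynomial.C + (1 : Matrix _ _ ℝ).map Polynomial.C), ?_, ?_⟩
  · refine (Polynomial.natDegree_det_X_add_C_le _ _).trans ?_
    simp
  · intro t
    have h1 : (ContinuousLinearMap.id ℝ E + t • A).det = (1 + t • M).det := by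
      rw [ContinuousLinearMap.det, ← LinearMap.det_toMatrix B]
      congr 1
      simp [M]
    rw [h1, ← Polynomial.coe_evalRingHom, RingHom.map_det]
    congr 1
    ext i j
    simp [Matrix.one_apply]
    split_ifs <;> simp <;> ring

variable [MeasurableSpace E] [BorelSpace E]

theorem small_vol (g : E → E) (g' : E → E →L[ℝ] E)
    (hg : ∀ x ∈ closedBall (0:E) 1, HasStrictFDerivAt g (g' x) x)
    (C : ℝ) (hC0 : 0 < C) (hC : ∀ x ∈ closedBall (0:E) 1, ‖g' x‖ ≤ C)
    (hs : ∀ x, ‖x‖ = 1 → g x = 0) (hb : ∀ x ∈ closedBall (0:E) 1, ‖x + g x‖ ≤ 1)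
    (hcg : ContinuousOn g' (closedBall (0:E) 1))
    (t : ℝ) (ht0 : 0 < t) (ht1 : t < 1) (htC : t * C < 1) :
    ∫ x in ball (0:E) 1, (ContinuousLinearMap.id ℝ E + t • g' x).det =
      (volume (ball (0:E) 1)).toReal := by
  set f : E → E := fun x => x + t • g x with hf
  set f' : E → E →L[ℝ] E := fun x => ContinuousLinearMap.id ℝ E + t • g' x with hf'
  have hfd : ∀ x ∈ closedBall (0:E) 1, HasStrictFDerivAt f (f' x) x := fun x hx =>
    (hasStrictFDerivAt_id x).add ((hg x hx).const_smul t)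
  have hlip : ∀ x ∈ closedBall (0:E) 1, ∀ y ∈ closedBall (0:E) 1, ‖g x - g y‖ ≤ C * ‖x - y‖ := by
    intro x hx y hy
    exact (convex_closedBall (0:E) 1).norm_image_sub_le_of_norm_hasFDerivWithin_le
      (fun z hz => (hg z hz).hasFDerivAt.hasFDerivWithinAt) hC hy hx
  have hinj : InjOn f (closedBall (0:E) 1) := by
    intro x hx y hy hxy
    by_contra hne
    have h1 : x - y = t • (g y - g x) := by
      simp only [hf] at hxy
      rw [smul_sub]
      rw [sub_eq_sub_iff_add_eq_add, hxy, add_comm]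
    have h2 : ‖x - y‖ ≤ t * (C * ‖x - y‖) := by
      calc ‖x - y‖ = t * ‖g y - g x‖ := by rw [h1, norm_smul, Real.norm_of_nonneg ht0.le]
        _ ≤ t * (C * ‖x - y‖) := by
          gcongr
          rw [norm_sub_rev x y]
          exact hlip y hy x hx
    have h3 : 0 < ‖x - y‖ := norm_pos_iff.2 (sub_ne_zero.2 hne)
    nlinarith
  have hinjL : ∀ s ∈ Icc (0:ℝ) t, ∀ x ∈ closedBall (0:E) 1,
      Function.Injective (ContinuousLinearMap.id ℝ E + s • g' x) := by
    intro s hs' x hx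
    rw [injective_iff_map_eq_zero]
    intro v hv
    by_contra hne
    have h1 : v = - (s • g' x v) := by
      simp at hv
      exact eq_neg_of_add_eq_zero_left hv
    have h2 : ‖v‖ ≤ s * (C * ‖v‖) := by
      calc ‖v‖ = s * ‖g' x v‖ := by
            conv_lhs => rw [h1]
            rw [norm_neg, norm_smul, Real.norm_of_nonneg hs'.1]
        _ ≤ s * (C * ‖v‖) := by
          have := hs'.1
          gcongr
          exact (g' x).le_of_opNorm_le (hC x hx) v
    have h3 : 0 < ‖v‖ := norm_pos_iff.2 hne
    have : s * C ≤ t * C := by gcongr; exact hs'.2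
    nlinarith
  have hdetne : ∀ s ∈ Icc (0:ℝ) t, ∀ x ∈ closedBall (0:E) 1,
      (ContinuousLinearMap.id ℝ E + s • g' x).det ≠ 0 := by
    intro s hs' x hx h0
    have := LinearMap.bot_lt_ker_of_det_eq_zero (f := ((ContinuousLinearMap.id ℝ E + s • g' x : E →L[ℝ] E) : E →ₗ[ℝ] E)) h0
    rw [LinearMap.ker_eq_bot.2 (hinjL s hs' x hx)] at this
    exact lt_irrefl _ this
  have hdetpos : ∀ x ∈ closedBall (0:E) 1, 0 < (f' x).det := by
    intro x hx
    by_contra hneg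
    push Not at hneg
    have hc : ContinuousOn (fun s : ℝ => (ContinuousLinearMap.id ℝ E + s • g' x).det) (Icc 0 t) := by
      apply Continuous.continuousOn
      exact ContinuousLinearMap.continuous_det.comp (by fun_prop)
    have := intermediate_value_Icc' ht0.le hc
    have h0 : (0:ℝ) ∈ Icc ((ContinuousLinearMap.id ℝ E + t • g' x).det) ((ContinuousLinearMap.id ℝ E + (0:ℝ) • g' x).det) := by
      refine ⟨hneg, ?_⟩
      simp [ContinuousLinearMap.det]
    obtain ⟨s, hs', h⟩ := this h0
    exact hdetne s hs' x hx h
  have hsub : ball (0:E) 1 ⊆ closedBall 0 1 := ball_subset_closedBall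
  have hmaps : ∀ x ∈ ball (0:E) 1, f x ∈ ball (0:E) 1 := by
    intro x hx
    rw [mem_ball_zero_iff] at hx ⊢
    have h1 : f x = (1 - t) • x + t • (x + g x) := by
      simp only [hf]; module
    rw [h1]
    calc _ ≤ ‖(1 - t) • x‖ + ‖t • (x + g x)‖ := norm_add_le _ _
      _ = (1 - t) * ‖x‖ + t * ‖x + g x‖ := by
        rw [norm_smul, norm_smul, Real.norm_of_nonneg ht0.le, Real.norm_of_nonneg (by linarith)]
      _ < 1 := by
        have := hb x (by rw [mem_closedBall_zero_iff]; exact hx.le)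
        nlinarith
  have hopen : IsOpen (f '' ball (0:E) 1) := by
    rw [isOpen_iff_mem_nhds]
    rintro _ ⟨x, hx, rfl⟩
    have hsurj : Function.Surjective (f' x) := by
      have := hinjL t ⟨ht0.le, le_rfl⟩ x (hsub hx)
      exact (LinearMap.injective_iff_surjective (f := (f' x : E →ₗ[ℝ] E))).1 this
    have := (hfd x (hsub hx)).map_nhds_eq_of_surj (LinearMap.range_eq_top.2 hsurj)
    rw [← this]
    exact image_mem_map (isOpen_ball.mem_nhds hx)
  have himg : f '' ball (0:E) 1 = ball 0 1 := by
    apply Subset.antisymm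
    · rintro _ ⟨x, hx, rfl⟩; exact hmaps x hx
    · have hcl : IsClosed (f '' closedBall (0:E) 1) := by
        apply IsCompact.isClosed
        exact (isCompact_closedBall (0:E) 1).image_of_continuousOn
          (fun x hx => (hfd x hx).continuousAt.continuousWithinAt)
      have hpre : IsPreconnected (ball (0:E) 1) := (convex_ball (0:E) 1).isPreconnected
      intro y hy
      by_contra hny
      have hV : ball (0:E) 1 ⊆ f '' ball (0:E) 1 ∪ (f '' closedBall (0:E) 1)ᶜ := by
        intro z hz
        by_cases hzc : z ∈ f '' closedBall (0:E) 1
        · left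
          obtain ⟨x, hx, rfl⟩ := hzc
          refine ⟨x, ?_, rfl⟩
          rw [mem_closedBall_zero_iff] at hx
          rw [mem_ball_zero_iff] at hz ⊢
          rcases hx.lt_or_eq with h | h
          · exact h
          · exfalso
            simp only [hf, hs x h, smul_zero, add_zero] at hz
            linarith
        · exact Or.inr hzc
      have hy2 : y ∈ (f '' closedBall (0:E) 1)ᶜ := (hV hy).resolve_left hny
      obtain ⟨z, hz, hz1, hz2⟩ := hpre _ _ hopen hcl.isOpen_compl hV
        ⟨f 0, hmaps 0 (by simp), ⟨0, by simp, rfl⟩⟩ ⟨y, hy, hy2⟩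
      obtain ⟨x, hx, rfl⟩ := hz1
      exact hz2 ⟨x, hsub hx, rfl⟩
  have hcv := integral_image_eq_integral_abs_det_fderiv_smul volume (measurableSet_ball (x := (0:E)) (ε := 1))
    (fun x hx => (hfd x (hsub hx)).hasFDerivAt.hasFDerivWithinAt) (hinj.mono hsub) (fun _ => (1:ℝ))
  rw [himg] at hcv
  simp only [smul_eq_mul, mul_one, integral_const, measureReal_restrict_apply_univ] at hcv
  rw [show (volume (ball (0:E) 1)).toReal = volume.real (ball (0:E) 1) from rfl, hcv]
  apply setIntegral_congr_fun measurableSet_ball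
  intro x hx
  exact (abs_of_pos (hdetpos x (hsub hx))).symm

theorem no_retract (v : E → E) (hv : ContDiff ℝ 1 v) (hv0 : ∀ x ∈ closedBall (0:E) 1, v x ≠ 0)
    (hvs : ∀ x, ‖x‖ = 1 → v x = x) : False := by
  set r : E → E := fun x => ‖v x‖⁻¹ • v x with hr
  have hrn : ∀ x, v x ≠ 0 → ‖r x‖ = 1 := by
    intro x hx
    simp only [hr]
    rw [norm_smul, norm_inv, norm_norm, inv_mul_cancel₀ (norm_ne_zero_iff.2 hx)]
  have hrc : ∀ x, v x ≠ 0 → ContDiffAt ℝ 1 r x := by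
    intro x hx
    exact ((hv.contDiffAt.norm ℝ hx).inv (norm_ne_zero_iff.2 hx)).smul hv.contDiffAt
  set U : Set E := {x | v x ≠ 0} with hU
  have hUo : IsOpen U := isOpen_ne_fun hv.continuous continuous_const
  have hrCon : ContDiffOn ℝ 1 r U := fun x hx => (hrc x hx).contDiffWithinAt
  have hfc : ContinuousOn (fderiv ℝ r) U := hrCon.continuousOn_fderiv_of_isOpen hUo le_rfl
  have hBU : closedBall (0:E) 1 ⊆ U := hv0
  set g : E → E := fun x => r x - x with hg
  set g' : E → E →L[ℝ] E := fun x => fderiv ℝ r x - ContinuousLinearMap.id ℝ E with hg'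
  have hgd : ∀ x ∈ closedBall (0:E) 1, HasStrictFDerivAt g (g' x) x := fun x hx =>
    ((hrc x (hBU hx)).hasStrictFDerivAt one_ne_zero).sub (hasStrictFDerivAt_id x)
  have hg'c : ContinuousOn g' (closedBall (0:E) 1) := (hfc.mono hBU).sub continuousOn_const
  obtain ⟨C, hC⟩ := (isCompact_closedBall (0:E) 1).exists_bound_of_continuousOn hg'c
  set K := max C 1 with hK
  have hK1 : 1 ≤ K := le_max_right _ _
  have hsm : ∀ t : ℝ, 0 < t → t * (K + 1) < 1 →
      ∫ x in ball (0:E) 1, (ContinuousLinearMap.id ℝ E + t • g' x).det =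
      (volume (ball (0:E) 1)).toReal := by
    intro t ht htK
    apply small_vol g g' hgd K (by linarith) (fun x hx => (hC x hx).trans (le_max_left _ _)) _ _ hg'c t ht
      (by nlinarith) (by nlinarith)
    · intro x hx
      simp [hg, hr, hvs x hx, hx]
    · intro x hx
      simp only [hg, add_sub_cancel]
      exact (hrn x (hBU hx)).le
  set N := Module.finrank ℝ E with hN
  let nodes : ℕ → ℝ := fun j => 1 / ((K + 1) * (j + 2))
  have hnodes_inj : Set.InjOn nodes (Finset.range (N + 1)) := by
    intro a _ b _ hab
    simp only [nodes] at hab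
    have hK0 : K + 1 ≠ 0 := by linarith
    have ha : (a:ℝ) + 2 ≠ 0 := by positivity
    have hb : (b:ℝ) + 2 ≠ 0 := by positivity
    field_simp at hab
    have : (a:ℝ) = b := by linarith
    exact_mod_cast this
  have hnode0 : ∀ j, 0 < nodes j := fun j => by
    have : 0 < K + 1 := by linarith
    simp only [nodes]; positivity
  have hnode1 : ∀ j, nodes j * (K + 1) < 1 := fun j => by
    have : 0 < K + 1 := by linarith
    simp only [nodes]
    have hj : (0:ℝ) ≤ j := Nat.cast_nonneg j
    rw [div_mul_eq_mul_div, one_mul, div_lt_one (by positivity)]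
    nlinarith
  let w : ℕ → ℝ := fun j => (Lagrange.basis (Finset.range (N + 1)) nodes j).eval 1
  have hw : ∑ j ∈ Finset.range (N + 1), w j = 1 := by
    have := congrArg (Polynomial.eval 1) (Lagrange.sum_basis hnodes_inj (by simp))
    rw [Polynomial.eval_finsetSum] at this
    simpa [w] using this
  have h_interp : ∀ x, (ContinuousLinearMap.id ℝ E + (1:ℝ) • g' x).det =
      ∑ j ∈ Finset.range (N + 1), w j * (ContinuousLinearMap.id ℝ E + nodes j • g' x).det := by
    intro x
    obtain ⟨q, hq, hqe⟩ := detPoly (g' x)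
    rw [← hqe 1]
    have hdeg : q.degree < (Finset.range (N + 1)).card := by
      rw [Finset.card_range]
      refine Polynomial.degree_le_natDegree.trans_lt ?_
      exact_mod_cast Nat.lt_succ_of_le hq
    conv_lhs => rw [Lagrange.eq_interpolate hnodes_inj hdeg]
    rw [Lagrange.interpolate_apply, Polynomial.eval_finsetSum]
    refine Finset.sum_congr rfl fun j _ => ?_
    simp [w, hqe, mul_comm]
  have hzero : ∀ x ∈ ball (0:E) 1, (ContinuousLinearMap.id ℝ E + (1:ℝ) • g' x).det = 0 := by
    intro x hx
    have hxU : x ∈ U := hBU (ball_subset_closedBall hx)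
    have h1 : ContinuousLinearMap.id ℝ E + (1:ℝ) • g' x = fderiv ℝ r x := by
      simp [hg']
    rw [h1]
    by_contra hne
    have hdr : HasFDerivAt r (fderiv ℝ r x) x := ((hrc x hxU).differentiableAt one_ne_zero).hasFDerivAt
    have hsurj : ∃ h, fderiv ℝ r x h = r x := by
      have := (LinearMap.equivOfDetNeZero ((fderiv ℝ r x : E →L[ℝ] E) : E →ₗ[ℝ] E) hne).surjective (r x)
      obtain ⟨h, hh⟩ := this
      exact ⟨h, hh⟩
    obtain ⟨h, hh⟩ := hsurj
    have hd2 := hdr.norm_sq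
    have hev : (fun y => ‖r y‖ ^ 2) =ᶠ[𝓝 x] fun _ => (1:ℝ) := by
      filter_upwards [hUo.mem_nhds hxU] with y hy
      rw [hrn y hy]; norm_num
    have hd3 : HasFDerivAt (fun y => ‖r y‖ ^ 2) (0 : E →L[ℝ] ℝ) x :=
      (hasFDerivAt_const (1:ℝ) x).congr_of_eventuallyEq hev
    have := congrArg (fun L : E →L[ℝ] ℝ => L h) (hd2.unique hd3)
    simp [hh, hrn x hxU] at this
  have hI : ∫ x in ball (0:E) 1, (ContinuousLinearMap.id ℝ E + (1:ℝ) • g' x).det = 0 :=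
    setIntegral_eq_zero_of_forall_eq_zero hzero
  have hI2 : ∫ x in ball (0:E) 1, (ContinuousLinearMap.id ℝ E + (1:ℝ) • g' x).det =
      (volume (ball (0:E) 1)).toReal := by
    simp_rw [h_interp]
    rw [integral_finsetSum]
    · simp_rw [integral_const_mul, hsm _ (hnode0 _) (hnode1 _)]
      rw [← Finset.sum_mul, hw, one_mul]
    · intro j _
      apply Integrable.const_mul
      have : ContinuousOn (fun x => (ContinuousLinearMap.id ℝ E + nodes j • g' x).det) (closedBall (0:E) 1) :=
        ContinuousLinearMap.continuous_det.comp_continuousOn (continuousOn_const.add (hg'c.const_smul (nodes j)))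
      exact (this.integrableOn_compact (isCompact_closedBall (0:E) 1)).mono_set ball_subset_closedBall
  have hpos : 0 < (volume (ball (0:E) 1)).toReal :=
    ENNReal.toReal_pos (measure_ball_pos _ _ one_pos).ne' measure_ball_lt_top.ne
  linarith

theorem brouwer_ball (h : E → E) (hc : Continuous h) (hm : ∀ x, ‖x‖ ≤ 1 → ‖h x‖ ≤ 1) :
    ∃ x, ‖x‖ ≤ 1 ∧ h x = x := by
  by_contra hcon
  push Not at hcon
  obtain ⟨δ, hδ0, hδ1, hδ⟩ : ∃ δ : ℝ, 0 < δ ∧ δ < 1 ∧ ∀ x ∈ closedBall (0:E) 1, δ ≤ ‖x - h x‖ := by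
    obtain ⟨x0, hx0, hmin⟩ := (isCompact_closedBall (0:E) 1).exists_isMinOn ⟨0, by simp⟩
      (f := fun x => ‖x - h x‖) (by fun_prop)
    have : 0 < ‖x0 - h x0‖ := by
      rw [norm_pos_iff, sub_ne_zero]
      exact fun hh => hcon x0 (by simpa using hx0) hh.symm
    refine ⟨min ‖x0 - h x0‖ (1/2), by positivity, lt_of_le_of_lt (min_le_right _ _) (by norm_num), ?_⟩
    intro x hx
    exact (min_le_left _ _).trans (hmin hx)
  obtain ⟨p, hp, hpa, -⟩ := Continuous.exists_contDiff_approx 1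
    (f := fun x => (1 - δ / 4) • h x) (ε := fun _ => δ / 8) (by fun_prop) continuous_const (fun _ => by positivity)
  have hp1 : ∀ x, ‖x‖ ≤ 1 → ‖p x‖ ≤ 1 - δ / 8 := by
    intro x hx
    have h1 := hpa x
    rw [dist_eq_norm] at h1
    calc ‖p x‖ = ‖(p x - (1 - δ / 4) • h x) + (1 - δ / 4) • h x‖ := by rw [sub_add_cancel]
      _ ≤ ‖(p x - (1 - δ / 4) • h x)‖ + ‖(1 - δ / 4) • h x‖ := norm_add_le _ _
      _ ≤ δ / 8 + (1 - δ / 4) * 1 := by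
        rw [norm_smul, Real.norm_of_nonneg (by linarith)]
        gcongr
        · linarith
        · exact hm x hx
      _ = _ := by ring
  have hp2 : ∀ x, ‖x‖ ≤ 1 → δ / 2 ≤ ‖x - p x‖ := by
    intro x hx
    have h1 := hpa x
    rw [dist_eq_norm] at h1
    have h2 := hδ x (by simpa using hx)
    have h3 : ‖x - h x‖ ≤ ‖x - p x‖ + ‖p x - (1 - δ / 4) • h x‖ + ‖(δ / 4) • h x‖ := by
      have : x - h x = (x - p x) + (p x - (1 - δ / 4) • h x) - (δ / 4) • h x := by module
      rw [this]
      exact (norm_sub_le _ _).trans (by gcongr; exact norm_add_le _ _)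
    rw [norm_smul, Real.norm_of_nonneg (by linarith)] at h3
    have h4 : δ / 4 * ‖h x‖ ≤ δ / 4 * 1 := by gcongr; exact hm x hx
    linarith
  obtain ⟨k, hk⟩ := exists_pow_lt_of_lt_one (show 0 < δ / 4 by positivity) (show 1 - δ / 8 < 1 by linarith)
  set v : E → E := fun x => x - (1 - (‖x‖ ^ 2) ^ k) • p x with hv
  refine no_retract v ?_ ?_ ?_
  · have hp' : ContDiff ℝ 1 p := by exact_mod_cast hp
    exact contDiff_id.sub ((contDiff_const.sub ((contDiff_norm_sq ℝ).pow k)).smul hp')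
  · intro x hx h0
    have hx1 : ‖x‖ ≤ 1 := by simpa using hx
    have hpw0 : 0 ≤ (‖x‖ ^ 2) ^ k := by positivity
    have hpw1 : (‖x‖ ^ 2) ^ k ≤ 1 := pow_le_one₀ (by positivity) (pow_le_one₀ (norm_nonneg _) hx1)
    have h1 : x = (1 - (‖x‖ ^ 2) ^ k) • p x := by
      simpa [hv, sub_eq_zero] using h0
    have h2 : ‖x‖ ≤ 1 - δ / 8 := by
      have : ‖x‖ = (1 - (‖x‖ ^ 2) ^ k) * ‖p x‖ := by
        conv_lhs => rw [h1]
        rw [norm_smul, Real.norm_of_nonneg (by linarith)]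
      have := hp1 x hx1
      have := norm_nonneg (p x)
      nlinarith
    have h3 : (‖x‖ ^ 2) ^ k ≤ (1 - δ / 8) ^ k := by
      apply pow_le_pow_left₀ (by positivity)
      have := norm_nonneg x
      nlinarith
    have h4 : x - p x = - ((‖x‖ ^ 2) ^ k • p x) := by
      nth_rewrite 1 [h1]
      module
    have h5 := hp2 x hx1
    rw [h4, norm_neg, norm_smul, Real.norm_of_nonneg hpw0] at h5
    have := hp1 x hx1
    have := norm_nonneg (p x)
    nlinarith
  · intro x hx
    simp [hv, hx]

theorem no_thin_injection (f : E → E) (hf : Continuous f) (hinj : Function.Injective f)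
    (Z : Set E) (hZ : IsClosed Z) (u : E) (hu : ∀ y, {t : ℝ | y + t • u ∈ Z}.Countable)
    (hfZ : ∀ x, f x ∈ Z) : False := by
  have hnull : volume Z = 0 := by
    let L : ℝ →L[ℝ] E := ContinuousLinearMap.smulRight (1 : ℝ →L[ℝ] ℝ) u
    have := ae_mem_of_ae_add_linearMap_mem L.toLinearMap volume (volume : Measure E)
      (s := Zᶜ) hZ.measurableSet.compl (by
        intro y
        rw [ae_iff]
        have h1 : {a : ℝ | ¬ (y + L.toLinearMap a ∈ Zᶜ)} = {t : ℝ | y + t • u ∈ Z} := by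
          ext t; simp [L]
        rw [h1]
        exact (hu y).measure_zero _)
    rw [ae_iff] at this
    simpa using this
  let K : Set E := closedBall 0 1
  have hKc : IsCompact K := isCompact_closedBall _ _
  haveI : CompactSpace K := isCompact_iff_compactSpace.1 hKc
  have hce : IsClosedEmbedding (fun x : K => f x) :=
    Continuous.isClosedEmbedding (by fun_prop) (fun a b hab => Subtype.ext (hinj hab))
  obtain ⟨G, hG⟩ := ContinuousMap.exists_extension hce (⟨fun x : K => (x : E), by fun_prop⟩ : C(K, E))
  have hG' : ∀ x ∈ K, G (f x) = x := fun x hx => congrArg (fun F : C(K, E) => F ⟨x, hx⟩) hG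
  obtain ⟨P, hP, hPa, -⟩ := Continuous.exists_contDiff_approx 1
    (f := G) (ε := fun _ => 1 / 2) G.continuous continuous_const (fun _ => by norm_num)
  have hPZ : volume (P '' Z) = 0 := by
    apply addHaar_image_eq_zero_of_differentiableOn_of_addHaar_eq_zero _ _ hnull
    have : ContDiff ℝ 1 P := by exact_mod_cast hP
    exact (this.differentiable one_ne_zero).differentiableOn
  obtain ⟨c, hc1, hc2⟩ : ∃ c ∈ ball (0:E) (1/2), c ∉ P '' Z := by
    by_contra hcon
    push Not at hcon
    have h1 : volume (ball (0:E) (1/2)) ≤ volume (P '' Z) := measure_mono hcon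
    have h2 := measure_ball_pos (volume : Measure E) 0 (show (0:ℝ) < 1/2 by norm_num)
    rw [hPZ] at h1
    exact absurd h2 (not_lt.2 h1)
  obtain ⟨x, hx, hfix⟩ := brouwer_ball (fun x => x - P (f x) + c) (by
      have := hP.continuous
      fun_prop) (by
    intro x hx
    have h1 := hPa (f x)
    rw [dist_eq_norm, hG' x (by simpa [K] using hx)] at h1
    rw [mem_ball_zero_iff] at hc1
    calc ‖x - P (f x) + c‖ ≤ ‖x - P (f x)‖ + ‖c‖ := norm_add_le _ _
      _ ≤ 1 := by rw [norm_sub_rev]; linarith)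
  apply hc2
  refine ⟨f x, hfZ x, ?_⟩
  have h2 : x - P (f x) + c = x := hfix
  have : c - P (f x) = 0 := by
    calc c - P (f x) = (x - P (f x) + c) - x := by abel
      _ = 0 := by rw [h2, sub_self]
  exact (sub_eq_zero.1 this).symm

end Topo
end Part1

section Part2
open Matrix Set Topology

theorem no_thin_injection' {V : Type*} [AddCommGroup V] [Module ℝ V] [TopologicalSpace V]
    [IsTopologicalAddGroup V] [ContinuousSMul ℝ V] [T2Space V] [FiniteDimensional ℝ V]
    (f : V → V) (hf : Continuous f) (hinj : Function.Injective f)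
    (Z : Set V) (hZ : IsClosed Z) (u : V) (hu : ∀ y, {t : ℝ | y + t • u ∈ Z}.Countable)
    (hfZ : ∀ x, f x ∈ Z) : False := by
  let e : V ≃L[ℝ] EuclideanSpace ℝ (Fin (Module.finrank ℝ V)) :=
    ContinuousLinearEquiv.ofFinrankEq (by simp)
  refine no_thin_injection (fun x => e (f (e.symm x))) (by fun_prop)
    (fun a b hab => e.symm.injective (hinj (e.injective hab))) (e.symm ⁻¹' Z)
    (hZ.preimage e.symm.continuous) (e u) ?_ ?_
  · intro y
    have := hu (e.symm y)
    simpa using this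
  · intro x
    simpa using hfZ _

theorem precon_ne {V : Type*} [AddCommGroup V] [Module ℂ V] [TopologicalSpace V]
    [ContinuousAdd V] [ContinuousSMul ℂ V] (s : Submodule ℂ V) (F : V → ℂ)
    (hF : ∀ X Y, ∃ q : Polynomial ℂ, ∀ z : ℂ, F (X + z • Y) = q.eval z) :
    IsPreconnected {X | X ∈ s ∧ F X ≠ 0} := by
  apply isPreconnected_of_forall_pair
  rintro X ⟨hX, hX0⟩ Y ⟨hY, hY0⟩
  obtain ⟨q, hq⟩ := hF X (Y - X)
  have hq0 : q ≠ 0 := by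
    rintro rfl
    apply hX0
    have := hq 0
    simpa using this
  have hco : IsPathConnected ({z : ℂ | q.IsRoot z})ᶜ := by
    apply Set.Countable.isPathConnected_compl_of_one_lt_rank
    · rw [Complex.rank_real_complex]; norm_num
    · exact (Polynomial.finite_setOfPred_isRoot hq0).countable
  refine ⟨(fun z : ℂ => X + z • (Y - X)) '' ({z : ℂ | q.IsRoot z})ᶜ, ?_, ?_, ?_, ?_⟩
  · rintro _ ⟨z, hz, rfl⟩
    refine ⟨s.add_mem hX (s.smul_mem _ (s.sub_mem hY hX)), ?_⟩
    rw [hq]; exact hz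
  · refine ⟨0, ?_, by simp⟩
    show ¬ q.IsRoot 0
    rw [Polynomial.IsRoot, ← hq]; simpa using hX0
  · refine ⟨1, ?_, by simp⟩
    show ¬ q.IsRoot 1
    rw [Polynomial.IsRoot, ← hq]; simpa using hY0
  · exact hco.isConnected.isPreconnected.image _ (by fun_prop)

theorem dense_ne {V : Type*} [AddCommGroup V] [Module ℂ V] [TopologicalSpace V]
    [ContinuousAdd V] [ContinuousSMul ℂ V] (s : Submodule ℂ V) (F : V → ℂ)
    (hF : ∀ X Y, ∃ q : Polynomial ℂ, ∀ z : ℂ, F (X + z • Y) = q.eval z)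
    (Y : V) (hY : Y ∈ s) (hY0 : F Y ≠ 0) (X : V) (hX : X ∈ s) :
    X ∈ closure {X | X ∈ s ∧ F X ≠ 0} := by
  obtain ⟨q, hq⟩ := hF X (Y - X)
  have hq0 : q ≠ 0 := by
    rintro rfl
    apply hY0
    have := hq 1
    simpa using this
  have hd : Dense ({z : ℂ | q.IsRoot z})ᶜ :=
    (Polynomial.finite_setOfPred_isRoot hq0).countable.dense_compl ℂ
  have h0 := hd 0
  have := image_closure_subset_closure_image (f := fun z : ℂ => X + z • (Y - X)) (by fun_prop) (mem_image_of_mem _ h0)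
  simp only [zero_smul, add_zero] at this
  refine closure_mono ?_ this
  rintro _ ⟨z, hz, rfl⟩
  refine ⟨s.add_mem hX (s.smul_mem _ (s.sub_mem hY hX)), ?_⟩
  rw [hq]; exact hz

/-- a version of the discriminant of the characteristic polynomial -/
noncomputable def dsc {R : Type*} [CommRing R] {n : ℕ} (M : Matrix (Fin n) (Fin n) R) : R :=
  (Polynomial.aeval M (Polynomial.derivative M.charpoly)).det

theorem dsc_map {R S : Type*} [CommRing R] [CommRing S] {n : ℕ} (f : R →+* S)
    (M : Matrix (Fin n) (Fin n) R) : f (dsc M) = dsc (M.map f) := by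
  unfold dsc
  rw [RingHom.map_det, Matrix.charpoly_map, Polynomial.derivative_map]
  congr 1
  have h : (algebraMap S (Matrix (Fin n) (Fin n) S)).comp f =
      (f.mapMatrix : Matrix (Fin n) (Fin n) R →+* _).comp (algebraMap R (Matrix (Fin n) (Fin n) R)) := by
    ext r i j
    simp only [RingHom.comp_apply, RingHom.mapMatrix_apply, Matrix.map_apply, Matrix.algebraMap_matrix_apply]
    split_ifs <;> simp
  exact Polynomial.map_aeval_eq_aeval_map h _ _

theorem dsc_continuous {n : ℕ} : Continuous (fun X : Matrix (Fin n) (Fin n) ℂ => dsc X) := by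
  have : (fun X : Matrix (Fin n) (Fin n) ℂ => dsc X) = fun X =>
      MvPolynomial.eval (fun p : Fin n × Fin n => X p.1 p.2) (dsc (Matrix.mvPolynomialX (Fin n) (Fin n) ℂ)) := by
    funext X
    rw [dsc_map]
    congr 1
    exact (Matrix.mvPolynomialX_map_eval₂ (RingHom.id ℂ) X).symm
  rw [this]
  exact (MvPolynomial.continuous_eval _).comp (by fun_prop)

theorem dsc_line {n : ℕ} (X Y : Matrix (Fin n) (Fin n) ℂ) :
    ∃ q : Polynomial ℂ, ∀ z : ℂ, dsc (X + z • Y) = q.eval z := by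
  refine ⟨dsc (X.map Polynomial.C + (Polynomial.X : Polynomial ℂ) • Y.map Polynomial.C), fun z => ?_⟩
  rw [← Polynomial.coe_evalRingHom, dsc_map]
  congr 1
  ext i j
  simp
  ring

theorem det_line {n : ℕ} (X Y : Matrix (Fin n) (Fin n) ℂ) :
    ∃ q : Polynomial ℂ, ∀ z : ℂ, (X + z • Y).det = q.eval z := by
  refine ⟨(X.map Polynomial.C + (Polynomial.X : Polynomial ℂ) • Y.map Polynomial.C).det, fun z => ?_⟩
  rw [← Polynomial.coe_evalRingHom, RingHom.map_det]
  congr 1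
  ext i j
  simp
  ring

theorem dsc_ne_zero_iff {n : ℕ} (hn : 0 < n) (X : Matrix (Fin n) (Fin n) ℂ) :
    dsc X ≠ 0 ↔ X.charpoly.Separable := by
  have : Nonempty (Fin n) := ⟨⟨0, hn⟩⟩
  rw [Polynomial.Separable, Polynomial.isCoprime_iff_aeval_ne_zero_of_isAlgClosed ℂ ℂ]
  have h1 : dsc X = 0 ↔ (0:ℂ) ∈ spectrum ℂ (Polynomial.aeval X (Polynomial.derivative X.charpoly)) := by
    rw [spectrum.zero_mem_iff, Matrix.isUnit_iff_isUnit_det, isUnit_iff_ne_zero, not_not]; rfl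
  rw [spectrum.map_polynomial_aeval_of_nonempty X _ (spectrum.nonempty_of_isAlgClosed_of_finiteDimensional ℂ X)] at h1
  rw [Ne, h1]
  simp only [mem_image, not_exists, not_and, Matrix.mem_spectrum_iff_isRoot_charpoly, Polynomial.IsRoot,
    Polynomial.coe_aeval_eq_eval]
  constructor
  · intro h a
    by_cases ha : Polynomial.eval a X.charpoly = 0
    · exact Or.inr (h a ha)
    · exact Or.inl ha
  · intro h a ha
    exact (h a).resolve_left (not_not.2 ha)

theorem charpoly_eq_of_spec {n : ℕ} (X Y : Matrix (Fin n) (Fin n) ℂ) (hY : Y.charpoly.Separable)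
    (h : spectrum ℂ Y ⊆ spectrum ℂ X) : Y.charpoly = X.charpoly := by
  have hY1 := Polynomial.nodup_roots hY
  have hsub : Y.charpoly.roots ≤ X.charpoly.roots := by
    rw [Multiset.le_iff_subset hY1]
    intro a ha
    rw [Polynomial.mem_roots (Matrix.charpoly_monic _).ne_zero] at ha ⊢
    rw [← Matrix.mem_spectrum_iff_isRoot_charpoly] at ha ⊢
    exact h ha
  have hcX := IsAlgClosed.splits X.charpoly
  have hcY := IsAlgClosed.splits Y.charpoly
  have he : Y.charpoly.roots = X.charpoly.roots := by
    apply Multiset.eq_of_le_of_card_le hsub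
    rw [← hcX.natDegree_eq_card_roots, ← hcY.natDegree_eq_card_roots]
    simp [Matrix.charpoly_natDegree_eq_dim]
  rw [hcX.eq_prod_roots_of_monic (Matrix.charpoly_monic _), hcY.eq_prod_roots_of_monic (Matrix.charpoly_monic _), he]

/-- block triangular matrices as a submodule -/
def blkSub {n : ℕ} (b : Fin n → ℕ) : Submodule ℂ (Matrix (Fin n) (Fin n) ℂ) where
  carrier := {X | X.BlockTriangular b}
  add_mem' := fun h1 h2 => h1.add h2
  zero_mem' := Matrix.blockTriangular_zero
  smul_mem' := fun c X hX i j hij => by simp [hX hij]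

theorem mem_blkSub {n : ℕ} (b : Fin n → ℕ) (X : Matrix (Fin n) (Fin n) ℂ) :
    X ∈ blkSub b ↔ X.BlockTriangular b := Iff.rfl

/-- a fixed tuple of distinct numbers -/
noncomputable def lam (n : ℕ) : Fin n → ℂ := fun i => ((i : ℕ) : ℂ)

theorem lam_inj (n : ℕ) : Function.Injective (lam n) := by
  intro i j h
  simp only [lam, Nat.cast_inj] at h
  exact Fin.ext h

theorem charpoly_diag {n : ℕ} (d : Fin n → ℂ) :
    (diagonal d).charpoly = ∏ i, (Polynomial.X - Polynomial.C (d i)) := by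
  exact Matrix.charpoly_diagonal d

theorem sep_diag {n : ℕ} (d : Fin n → ℂ) : (diagonal d).charpoly.Separable ↔ Function.Injective d := by
  rw [charpoly_diag, Polynomial.separable_prod_X_sub_C_iff]

theorem eq_charpoly_of_det {n : ℕ} (X Y : Matrix (Fin n) (Fin n) ℂ)
    (h : ∀ μ : ℂ, (scalar (Fin n) μ - X).det = (scalar (Fin n) μ - Y).det) : X.charpoly = Y.charpoly := by
  apply Polynomial.funext
  intro μ
  rw [Matrix.eval_charpoly, Matrix.eval_charpoly, h]

theorem dsc_smul_ne {n : ℕ} (hn : 0 < n) (w : ℂ) (hw : w ≠ 0) (M : Matrix (Fin n) (Fin n) ℂ)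
    (h : dsc (w • M) ≠ 0) : dsc M ≠ 0 := by
  rw [dsc_ne_zero_iff hn] at h ⊢
  have h1 : (w • M).charpoly.comp (Polynomial.C w * Polynomial.X) = Polynomial.C (w ^ n) * M.charpoly := by
    apply Polynomial.funext
    intro μ
    simp only [Polynomial.eval_comp, Polynomial.eval_mul, Polynomial.eval_C, Polynomial.eval_X,
      Matrix.eval_charpoly]
    have : scalar (Fin n) (w * μ) - w • M = w • (scalar (Fin n) μ - M) := by
      rw [smul_sub]
      congr 1
      ext i j
      simp [Matrix.diagonal_apply]
    rw [this, Matrix.det_smul, Fintype.card_fin]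
  have hw' : w ^ n ≠ 0 := pow_ne_zero _ hw
  have h2 := IsCoprime.map h (Polynomial.compRingHom (Polynomial.C w * Polynomial.X))
  simp only [Polynomial.coe_compRingHom_apply] at h2
  have h3 := congrArg Polynomial.derivative h1
  rw [Polynomial.derivative_comp] at h3
  simp at h3
  have h4 : M.charpoly = Polynomial.C (w ^ n)⁻¹ * (w • M).charpoly.comp (Polynomial.C w * Polynomial.X) := by
    rw [h1, ← mul_assoc, ← Polynomial.C_mul, inv_mul_cancel₀ hw', Polynomial.C_1, one_mul]
  have hu1 : IsUnit (Polynomial.C (w ^ n)⁻¹) := Polynomial.isUnit_C.2 (isUnit_iff_ne_zero.2 (inv_ne_zero hw'))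
  have hu2 : IsUnit (Polynomial.C w) := Polynomial.isUnit_C.2 (isUnit_iff_ne_zero.2 hw)
  rw [Polynomial.Separable, h4]
  rw [Polynomial.derivative_mul, Polynomial.derivative_C, zero_mul, zero_add, Polynomial.derivative_comp,
    isCoprime_mul_unit_left hu1]
  rw [Polynomial.derivative_C_mul, Polynomial.derivative_X, mul_one]
  rw [isCoprime_mul_unit_left_right hu2]
  exact h2

theorem charpoly_preserved {n : ℕ} (hn : 0 < n) (b : Fin n → ℕ)
    (φ : Matrix (Fin n) (Fin n) ℂ → Matrix (Fin n) (Fin n) ℂ)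
    (hmaps : ∀ X ∈ blkSub b, φ X ∈ blkSub b)
    (hcont : ContinuousOn φ (blkSub b))
    (hinj : Set.InjOn φ (blkSub b))
    (hspec : ∀ X ∈ blkSub b, spectrum ℂ (φ X) ⊆ spectrum ℂ X) :
    ∀ X ∈ blkSub b, (φ X).charpoly = X.charpoly := by
  have hL : diagonal (lam n) ∈ blkSub b := Matrix.blockTriangular_diagonal _
  have hL0 : dsc (diagonal (lam n)) ≠ 0 := (dsc_ne_zero_iff hn _).2 ((sep_diag _).2 (lam_inj n))
  obtain ⟨X0, hX0, hX0s⟩ : ∃ X ∈ blkSub b, dsc (φ X) ≠ 0 := by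
    by_contra hcon
    push Not at hcon
    have hfc : Continuous (fun X : blkSub b => (⟨φ X, hmaps X X.2⟩ : blkSub b)) :=
      Continuous.subtype_mk (continuousOn_iff_continuous_domRestrict.1 hcont) _
    have : ContinuousSMul ℝ (blkSub b) := inferInstanceAs (ContinuousSMul ℝ ((blkSub b).restrictScalars ℝ))
    have : FiniteDimensional ℝ (blkSub b) := Module.Finite.trans ℂ _
    refine no_thin_injection' (V := blkSub b) (fun X => ⟨φ X, hmaps X X.2⟩) hfc ?_
      {X | dsc (X : Matrix (Fin n) (Fin n) ℂ) = 0} ?_ ⟨_, hL⟩ ?_ ?_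
    · intro X Y h
      exact Subtype.ext (hinj X.2 Y.2 (congrArg Subtype.val h))
    · exact isClosed_eq (dsc_continuous.comp continuous_subtype_val) continuous_const
    · intro Y
      obtain ⟨q, hq⟩ := dsc_line (Y : Matrix (Fin n) (Fin n) ℂ) (diagonal (lam n))
      obtain ⟨q', hq'⟩ := dsc_line (diagonal (lam n)) (Y : Matrix (Fin n) (Fin n) ℂ)
      have hq0 : q ≠ 0 := by
        rintro rfl
        have hz : ∀ z : ℂ, dsc ((Y : Matrix (Fin n) (Fin n) ℂ) + z • diagonal (lam n)) = 0 := by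
          intro z; rw [hq]; simp
        have hcl : IsClosed {w : ℂ | dsc (diagonal (lam n) + w • (Y : Matrix (Fin n) (Fin n) ℂ)) = 0} := by
          apply isClosed_eq _ continuous_const
          exact dsc_continuous.comp (by fun_prop)
        have hsub : ({0} : Set ℂ)ᶜ ⊆ {w : ℂ | dsc (diagonal (lam n) + w • (Y : Matrix (Fin n) (Fin n) ℂ)) = 0} := by
          intro w hw
          have hw0 : w ≠ 0 := hw
          have h1 := hz w⁻¹
          by_contra h2
          have h3 : (diagonal (lam n) + w • (Y : Matrix (Fin n) (Fin n) ℂ)) =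
              w • ((Y : Matrix (Fin n) (Fin n) ℂ) + w⁻¹ • diagonal (lam n)) := by
            rw [smul_add, smul_smul, mul_inv_cancel₀ hw0, one_smul, add_comm]
          have h4 : (dsc (w • ((Y : Matrix (Fin n) (Fin n) ℂ) + w⁻¹ • diagonal (lam n)))) ≠ 0 := by
            rw [← h3]; exact h2
          exact dsc_smul_ne hn w hw0 _ h4 h1
        have : (0:ℂ) ∈ {w : ℂ | dsc (diagonal (lam n) + w • (Y : Matrix (Fin n) (Fin n) ℂ)) = 0} := by
          apply hcl.closure_subset_iff.2 hsub
          rw [(dense_compl_singleton (0:ℂ)).closure_eq]; trivial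
        simp at this
        exact hL0 this
      have hfin := Polynomial.finite_setOfPred_isRoot hq0
      refine Set.Finite.countable (Set.Finite.subset (hfin.preimage (f := fun t : ℝ => (t : ℂ)) (Complex.ofReal_injective.injOn)) ?_)
      intro t ht
      show q.IsRoot (t:ℂ)
      rw [Polynomial.IsRoot, ← hq]
      exact ht
    · intro X
      exact hcon X X.2
  have hpre := precon_ne (blkSub b) (fun X => dsc X) dsc_line
  have himp : ∀ X ∈ blkSub b, dsc (φ X) ≠ 0 → (φ X).charpoly = X.charpoly := fun X hX h =>
    charpoly_eq_of_spec X (φ X) ((dsc_ne_zero_iff hn _).1 h) (hspec X hX)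
  have hbase : X0 ∈ {X | X ∈ blkSub b ∧ dsc X ≠ 0} := by
    refine ⟨hX0, ?_⟩
    rw [dsc_ne_zero_iff hn, ← himp X0 hX0 hX0s, ← dsc_ne_zero_iff hn]
    exact hX0s
  have hall : ∀ X, X ∈ blkSub b → dsc X ≠ 0 → (φ X).charpoly = X.charpoly := by
    have hcp : ContinuousOn (fun X => (X, φ X)) {X | X ∈ blkSub b ∧ dsc X ≠ 0} :=
      continuousOn_id.prodMk (hcont.mono fun X hX => hX.1)
    have hpre2 := hpre.image _ hcp
    intro X hX hXd
    by_contra hne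
    have hne2 : ∃ μ : ℂ, (scalar (Fin n) μ - φ X).det ≠ (scalar (Fin n) μ - X).det := by
      by_contra h
      push Not at h
      exact hne (eq_charpoly_of_det _ _ h)
    have key := hpre2 {p | dsc p.2 ≠ 0}
      (⋃ μ : ℂ, {p | (scalar (Fin n) μ - p.2).det ≠ (scalar (Fin n) μ - p.1).det})
      (isOpen_ne_fun (dsc_continuous.comp continuous_snd) continuous_const)
      (isOpen_iUnion fun μ => isOpen_ne_fun (by fun_prop) (by fun_prop)) ?_
      ⟨_, ⟨X0, hbase, rfl⟩, hX0s⟩ ⟨_, ⟨X, ⟨hX, hXd⟩, rfl⟩, mem_iUnion.2 hne2⟩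
    · obtain ⟨_, ⟨W, hW, rfl⟩, h1, h2⟩ := key
      obtain ⟨μ, h2⟩ := mem_iUnion.1 h2
      apply h2
      have := himp W hW.1 h1
      simp only
      rw [← Matrix.eval_charpoly, ← Matrix.eval_charpoly, this]
    · rintro _ ⟨W, hW, rfl⟩
      by_cases h : (φ W).charpoly = W.charpoly
      · left
        show dsc (φ W) ≠ 0
        rw [dsc_ne_zero_iff hn, h, ← dsc_ne_zero_iff hn]
        exact hW.2
      · right
        rw [mem_iUnion]
        by_contra h'
        push Not at h'
        exact h (eq_charpoly_of_det _ _ fun μ => by simpa using h' μ)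
  intro X hX
  apply eq_charpoly_of_det
  intro μ
  have hX' := dense_ne (blkSub b) (fun X => dsc X) dsc_line _ hL hL0 X hX
  have hcw : ContinuousWithinAt (fun X => (scalar (Fin n) μ - φ X).det) {X | X ∈ blkSub b ∧ dsc X ≠ 0} X := by
    have : ContinuousWithinAt φ {X | X ∈ blkSub b ∧ dsc X ≠ 0} X := (hcont X hX).mono fun X hX => hX.1
    exact ((continuous_const.sub continuous_id).matrix_det.continuousAt).comp_continuousWithinAt this
  have hcw2 : ContinuousWithinAt (fun X : Matrix (Fin n) (Fin n) ℂ => (scalar (Fin n) μ - X).det) {X | X ∈ blkSub b ∧ dsc X ≠ 0} X :=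
    Continuous.continuousWithinAt (by fun_prop)
  have : (𝓝[{X | X ∈ blkSub b ∧ dsc X ≠ 0}] X).NeBot := mem_closure_iff_nhdsWithin_neBot.1 hX'
  refine tendsto_nhds_unique_of_eventuallyEq hcw hcw2 ?_
  filter_upwards [self_mem_nhdsWithin] with W hW
  rw [← Matrix.eval_charpoly, ← Matrix.eval_charpoly, hall W hW.1 hW.2]
end Part2

section Part3
open Matrix Topology
open Set hiding diagonal

/-- standing hypotheses on the map -/
structure HH {n : ℕ} (b : Fin n → ℕ) (φ : Matrix (Fin n) (Fin n) ℂ → Matrix (Fin n) (Fin n) ℂ) : Prop where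
  cont : ContinuousOn φ (blkSub b)
  inj : Set.InjOn φ (blkSub b)
  comm : ∀ X ∈ blkSub b, ∀ Y ∈ blkSub b, X * Y = Y * X → φ X * φ Y = φ Y * φ X
  cp : ∀ X ∈ blkSub b, (φ X).charpoly = X.charpoly

/-- a pair of mutually inverse matrices in the algebra -/
structure Fr {n : ℕ} (b : Fin n → ℕ) (S S' : Matrix (Fin n) (Fin n) ℂ) : Prop where
  m1 : S ∈ blkSub b
  m2 : S' ∈ blkSub b
  e1 : S * S' = 1
  e2 : S' * S = 1

theorem blk_mul {n : ℕ} {b : Fin n → ℕ} {X Y : Matrix (Fin n) (Fin n) ℂ} (hX : X ∈ blkSub b) (hY : Y ∈ blkSub b) :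
    X * Y ∈ blkSub b := Matrix.BlockTriangular.mul hX hY

theorem blk_diag {n : ℕ} {b : Fin n → ℕ} (d : Fin n → ℂ) : diagonal d ∈ blkSub b :=
  Matrix.blockTriangular_diagonal _

theorem charpoly_conj {n : ℕ} (T T' X : Matrix (Fin n) (Fin n) ℂ) (h : T * T' = 1) :
    (T' * X * T).charpoly = X.charpoly := by
  rw [Matrix.charpoly_mul_comm, ← mul_assoc, h, one_mul]

theorem HH.conj {n : ℕ} {b : Fin n → ℕ} {φ} (h : HH b φ) {S S' T T' : Matrix (Fin n) (Fin n) ℂ}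
    (hS : Fr b S S') (hT : T * T' = 1) : HH b (fun X => T' * φ (S * X * S') * T) := by
  have hm : ∀ X ∈ blkSub b, S * X * S' ∈ blkSub b := fun X hX => blk_mul (blk_mul hS.m1 hX) hS.m2
  refine ⟨?_, ?_, ?_, ?_⟩
  · have h1 : ContinuousOn (fun X => φ (S * X * S')) (blkSub b) :=
      h.cont.comp (by fun_prop) (fun X hX => hm X hX)
    have h2 : Continuous (fun Y : Matrix (Fin n) (Fin n) ℂ => T' * Y * T) := by fun_prop
    exact h2.comp_continuousOn h1
  · intro X hX Y hY hXY
    have h1 : φ (S * X * S') = φ (S * Y * S') := by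
      have := congrArg (fun Z => T * Z * T') hXY
      simp only [← mul_assoc, hT, one_mul] at this
      simpa only [mul_assoc, hT, mul_one] using this
    have h2 := h.inj (hm X hX) (hm Y hY) h1
    have := congrArg (fun Z => S' * Z * S) h2
    simp only [← mul_assoc, hS.e2, one_mul] at this
    simpa only [mul_assoc, hS.e2, mul_one] using this
  · intro X hX Y hY hXY
    have h1 := h.comm _ (hm X hX) _ (hm Y hY) (by
      have : ∀ A B : Matrix (Fin n) (Fin n) ℂ, S * A * S' * (S * B * S') = S * (A * B) * S' := by
        intro A B
        calc S * A * S' * (S * B * S') = S * A * (S' * S) * B * S' := by simp only [mul_assoc]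
          _ = _ := by rw [hS.e2]; simp only [mul_one, mul_assoc]
      rw [this, this, hXY])
    have : ∀ A B : Matrix (Fin n) (Fin n) ℂ, T' * A * T * (T' * B * T) = T' * (A * B) * T := by
      intro A B
      calc T' * A * T * (T' * B * T) = T' * A * (T * T') * B * T := by simp only [mul_assoc]
        _ = _ := by rw [hT]; simp only [mul_one, mul_assoc]
    show T' * φ (S * X * S') * T * (T' * φ (S * Y * S') * T) = _
    rw [this, this, h1]
  · intro X hX
    rw [charpoly_conj _ _ _ hT, h.cp _ (hm X hX), charpoly_conj _ _ _ hS.e2]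

theorem HH.transp {n : ℕ} {b : Fin n → ℕ} {φ} (h : HH b φ) : HH b (fun X => (φ X)ᵀ) := by
  refine ⟨?_, ?_, ?_, ?_⟩
  · exact continuous_id.matrix_transpose.comp_continuousOn h.cont
  · intro X hX Y hY hXY
    exact h.inj hX hY (Matrix.transpose_injective hXY)
  · intro X hX Y hY hXY
    simp only [← Matrix.transpose_mul, h.comm X hX Y hY hXY]
  · intro X hX
    rw [Matrix.charpoly_transpose, h.cp X hX]

theorem diag_of_eigvec {n : ℕ} (Y : Matrix (Fin n) (Fin n) ℂ) (d : Fin n → ℂ) (hd : Function.Injective d)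
    (T : Matrix (Fin n) (Fin n) ℂ) (hT0 : ∀ i, T.col i ≠ 0) (hT : ∀ i, Y *ᵥ T.col i = d i • T.col i) :
    IsUnit T ∧ Y * T = T * diagonal d := by
  constructor
  · rw [← Matrix.linearIndependent_cols_iff_isUnit]
    apply Module.End.eigenvectors_linearIndependent' (Matrix.toLin' Y) d hd
    intro i
    rw [Module.End.hasEigenvector_iff, Module.End.mem_eigenspace_iff]
    refine ⟨?_, hT0 i⟩
    rw [Matrix.toLin'_apply]; exact hT i
  · ext i j
    have := congrFun (hT j) i
    rw [Matrix.mul_diagonal, mul_comm]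
    simpa [Matrix.mulVec, Matrix.mul_apply, dotProduct] using this

theorem diagonalize {n : ℕ} (Y : Matrix (Fin n) (Fin n) ℂ) (d : Fin n → ℂ) (hd : Function.Injective d)
    (hY : Y.charpoly = (diagonal d).charpoly) :
    ∃ T T' : Matrix (Fin n) (Fin n) ℂ, T * T' = 1 ∧ T' * T = 1 ∧ Y = T * diagonal d * T' := by
  have h1 : ∀ i, ∃ v : Fin n → ℂ, v ≠ 0 ∧ Y *ᵥ v = d i • v := by
    intro i
    have : (scalar (Fin n) (d i) - Y).det = 0 := by
      rw [← Matrix.eval_charpoly, hY, charpoly_diag, Polynomial.eval_prod]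
      exact Finset.prod_eq_zero (Finset.mem_univ i) (by simp)
    obtain ⟨v, hv, hv2⟩ := Matrix.exists_mulVec_eq_zero_iff.2 this
    refine ⟨v, hv, ?_⟩
    rw [Matrix.sub_mulVec, sub_eq_zero] at hv2
    rw [← hv2]
    ext j
    simp
  choose v hv0 hv using h1
  obtain ⟨hu, he⟩ := diag_of_eigvec Y d hd (Matrix.of fun i j => v j i) (fun i => hv0 i) (fun i => hv i)
  obtain ⟨u, hu⟩ := hu
  rw [← hu] at he
  refine ⟨u, (u⁻¹ : (Matrix (Fin n) (Fin n) ℂ)ˣ), by simp, by simp, ?_⟩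
  rw [← he, mul_assoc]; simp

theorem diagonal_of_comm {n : ℕ} (Y : Matrix (Fin n) (Fin n) ℂ) (d : Fin n → ℂ) (hd : Function.Injective d)
    (h : Y * diagonal d = diagonal d * Y) : Y = diagonal (fun i => Y i i) := by
  ext i j
  by_cases hij : i = j
  · subst hij; simp
  · rw [Matrix.diagonal_apply_ne _ hij]
    have := congrFun (congrFun h i) j
    rw [Matrix.mul_diagonal, Matrix.diagonal_mul] at this
    have h3 : (d j - d i) * Y i j = 0 := by linear_combination this
    rcases mul_eq_zero.1 h3 with h4 | h4
    · exact absurd (hd (sub_eq_zero.1 h4)) (Ne.symm hij)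
    · exact h4

theorem frame_one {n : ℕ} (hn : 0 < n) {b : Fin n → ℕ} {φ} (h : HH b φ) :
    ∃ T T' : Matrix (Fin n) (Fin n) ℂ, T * T' = 1 ∧ T' * T = 1 ∧
      ∀ d, φ (diagonal d) = T * diagonal d * T' := by
  obtain ⟨T, T', h1, h2, h3⟩ := diagonalize (φ (diagonal (lam n))) (lam n) (lam_inj n) (h.cp _ (blk_diag _))
  refine ⟨T, T', h1, h2, ?_⟩
  set ψ : (Fin n → ℂ) → Matrix (Fin n) (Fin n) ℂ := fun d => T' * φ (diagonal d) * T with hψ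
  have hψc : Continuous ψ := by
    have : Continuous (fun d : Fin n → ℂ => φ (diagonal d)) :=
      h.cont.comp_continuous (continuous_id.matrix_diagonal) (fun d => blk_diag d)
    have h2 : Continuous (fun Y : Matrix (Fin n) (Fin n) ℂ => T' * Y * T) := by fun_prop
    exact h2.comp this
  have hψl : ψ (lam n) = diagonal (lam n) := by
    simp only [hψ]
    rw [h3]
    calc _ = (T' * T) * diagonal (lam n) * (T' * T) := by simp only [mul_assoc]
      _ = _ := by rw [h2]; simp
  have hψm : ∀ A B : Matrix (Fin n) (Fin n) ℂ, T' * A * T * (T' * B * T) = T' * (A * B) * T := by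
    intro A B
    calc T' * A * T * (T' * B * T) = T' * A * (T * T') * B * T := by simp only [mul_assoc]
      _ = _ := by rw [h1]; simp only [mul_one, mul_assoc]
  have hψd : ∀ d, ψ d = diagonal (fun i => ψ d i i) := by
    intro d
    apply diagonal_of_comm _ (lam n) (lam_inj n)
    rw [← hψl]
    simp only [hψ]
    rw [hψm, hψm, h.comm _ (blk_diag _) _ (blk_diag _)]
    simp [mul_comm]
  have hψs : ∀ d i, ∃ j, ψ d i i = d j := by
    intro d i
    have h5 : (ψ d).charpoly = (diagonal d).charpoly := by
      simp only [hψ]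
      rw [charpoly_conj _ _ _ h1, h.cp _ (blk_diag _)]
    rw [hψd, charpoly_diag, charpoly_diag] at h5
    have h6 := congrArg (Polynomial.eval (ψ d i i)) h5
    rw [Polynomial.eval_prod, Polynomial.eval_prod, Finset.prod_eq_zero (Finset.mem_univ i) (by simp)] at h6
    obtain ⟨j, -, hj⟩ := Finset.prod_eq_zero_iff.1 h6.symm
    refine ⟨j, ?_⟩
    simpa [sub_eq_zero] using hj
  have hline : ∀ X Y : Fin n → ℂ, ∃ q : Polynomial ℂ, ∀ z : ℂ, dsc (diagonal (X + z • Y)) = q.eval z := by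
    intro X Y
    obtain ⟨q, hq⟩ := dsc_line (diagonal X) (diagonal Y)
    refine ⟨q, fun z => ?_⟩
    rw [← hq]; congr 1
    ext i j
    by_cases hij : i = j
    · subst hij; simp
    · simp [hij]
  have hl0 : dsc (diagonal (lam n)) ≠ 0 := (dsc_ne_zero_iff hn _).2 ((sep_diag _).2 (lam_inj n))
  have hF : ∀ d : Fin n → ℂ, dsc (diagonal d) ≠ 0 ↔ Function.Injective d := fun d => by
    rw [dsc_ne_zero_iff hn, sep_diag]
  have hpre := precon_ne (⊤ : Submodule ℂ (Fin n → ℂ)) (fun d => dsc (diagonal d)) hline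
  have hgen : ∀ d : Fin n → ℂ, dsc (diagonal d) ≠ 0 → ∀ i, ψ d i i = d i := by
    intro d hd i
    by_contra hne
    have hcp : Continuous (fun d : Fin n → ℂ => (d, ψ d i i)) :=
      continuous_id.prodMk (hψc.matrix_elem i i)
    have hpre2 := hpre.image _ hcp.continuousOn
    have key := hpre2 {p | ∏ j ∈ Finset.univ.erase i, (p.2 - p.1 j) ≠ 0} {p | p.2 ≠ p.1 i}
      (isOpen_ne_fun (by fun_prop) continuous_const) (isOpen_ne_fun (by fun_prop) (by fun_prop)) ?_
      ⟨_, ⟨lam n, ⟨trivial, hl0⟩, rfl⟩, ?_⟩ ⟨_, ⟨d, ⟨trivial, hd⟩, rfl⟩, hne⟩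
    · obtain ⟨_, ⟨w, hw, rfl⟩, h7, h8⟩ := key
      obtain ⟨j, hj⟩ := hψs w i
      simp only [mem_ofPred_eq] at h7 h8
      apply h7
      apply Finset.prod_eq_zero (i := j)
      · simp only [Finset.mem_erase, Finset.mem_univ, and_true]
        rintro rfl
        exact h8 hj
      · rw [hj, sub_self]
    · rintro _ ⟨w, ⟨-, hw⟩, rfl⟩
      obtain ⟨j, hj⟩ := hψs w i
      by_cases hij : j = i
      · left
        subst hij
        simp only [mem_ofPred_eq]
        rw [Finset.prod_ne_zero_iff]
        intro k hk
        rw [hj, sub_ne_zero]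
        intro he
        exact (Finset.mem_erase.1 hk).1 ((hF w).1 hw he).symm
      · right
        simp only [mem_ofPred_eq]
        rw [hj]
        intro he
        exact hij ((hF w).1 hw he)
    · simp only [mem_ofPred_eq]
      rw [Finset.prod_ne_zero_iff]
      intro k hk
      rw [hψl, diagonal_apply_eq, sub_ne_zero]
      intro he
      exact (Finset.mem_erase.1 hk).1 (lam_inj n he).symm
  have hfin : ψ = fun d => diagonal d := by
    apply Continuous.ext_on (s := {X : Fin n → ℂ | X ∈ (⊤ : Submodule ℂ (Fin n → ℂ)) ∧ dsc (diagonal X) ≠ 0}) _ hψc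
      continuous_id.matrix_diagonal
    · rintro d ⟨-, hd⟩
      rw [hψd d]
      congr 1
      funext i
      exact hgen d hd i
    · intro d
      exact dense_ne ⊤ (fun d => dsc (diagonal d)) hline (lam n) trivial hl0 d trivial
  intro d
  have hfd : T' * φ (diagonal d) * T = diagonal d := congrFun hfin d
  calc φ (diagonal d) = (T * T') * φ (diagonal d) * (T * T') := by rw [h1]; simp
    _ = T * (T' * φ (diagonal d) * T) * T' := by simp only [mul_assoc]
    _ = _ := by rw [hfd]

theorem Fr.one {n : ℕ} {b : Fin n → ℕ} : Fr b (1 : Matrix (Fin n) (Fin n) ℂ) 1 :=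
  ⟨Matrix.blockTriangular_one, Matrix.blockTriangular_one, by simp, by simp⟩

theorem frame {n : ℕ} (hn : 0 < n) {b : Fin n → ℕ} {φ} (h : HH b φ) {S S'} (hS : Fr b S S') :
    ∃ T T' : Matrix (Fin n) (Fin n) ℂ, T * T' = 1 ∧ T' * T = 1 ∧
      ∀ d, φ (S * diagonal d * S') = T * diagonal d * T' := by
  have := frame_one hn (h.conj hS (T := 1) (T' := 1) (by simp))
  simpa using this
end Part3

section Part4
open Matrix Topology
open Set hiding diagonal

section P4
set_option linter.all false
variable {n : ℕ} {b : Fin n → ℕ} {φ : Matrix (Fin n) (Fin n) ℂ → Matrix (Fin n) (Fin n) ℂ}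

/-- unit vector -/
def ee (i : Fin n) : Fin n → ℂ := Pi.single i 1

def colM (i : Fin n) (x : Fin n → ℂ) : Matrix (Fin n) (Fin n) ℂ := Matrix.of fun a c => if c = i then x a else 0
def rowM (i : Fin n) (y : Fin n → ℂ) : Matrix (Fin n) (Fin n) ℂ := Matrix.of fun a c => if a = i then y c else 0

theorem ee_apply (i a : Fin n) : ee i a = if a = i then 1 else 0 := by
  simp [ee, Pi.single_apply]

theorem colM_apply (i : Fin n) (x) (a c) : colM i x a c = if c = i then x a else 0 := rfl
theorem rowM_apply (i : Fin n) (x) (a c) : rowM i x a c = if a = i then x c else 0 := rfl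

theorem colM_mul_colM (i : Fin n) (x y) : colM i x * colM i y = y i • colM i x := by
  ext a c
  simp only [Matrix.mul_apply, colM_apply, Matrix.smul_apply, smul_eq_mul]
  by_cases h : c = i <;> simp [h, mul_comm]

theorem rowM_mul_rowM (i : Fin n) (x y) : rowM i x * rowM i y = x i • rowM i y := by
  ext a c
  simp only [Matrix.mul_apply, rowM_apply, Matrix.smul_apply, smul_eq_mul]
  by_cases h : a = i <;> simp [h]

theorem colM_mul_diag (i : Fin n) (x d) : colM i x * diagonal d = d i • colM i x := by
  ext a c
  simp only [Matrix.mul_diagonal, colM_apply, Matrix.smul_apply, smul_eq_mul]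
  by_cases h : c = i <;> simp [h, mul_comm]

theorem diag_mul_rowM (i : Fin n) (x d) : diagonal d * rowM i x = d i • rowM i x := by
  ext a c
  simp only [Matrix.diagonal_mul, rowM_apply, Matrix.smul_apply, smul_eq_mul]
  by_cases h : a = i <;> simp [h]

theorem diag_mul_colM (i : Fin n) (x d) : diagonal d * colM i x = colM i (fun a => d a * x a) := by
  ext a c
  simp only [Matrix.diagonal_mul, colM_apply]
  by_cases h : c = i <;> simp [h]

theorem rowM_mul_diag (i : Fin n) (x d) : rowM i x * diagonal d = rowM i (fun a => x a * d a) := by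
  ext a c
  simp only [Matrix.mul_diagonal, rowM_apply]
  by_cases h : a = i <;> simp [h]

theorem colM_mem {i : Fin n} {x : Fin n → ℂ} (hx : ∀ a, x a ≠ 0 → b a ≤ b i) : colM i x ∈ blkSub b := by
  intro a c hac
  rw [colM_apply]
  split_ifs with h
  · subst h
    by_contra h0
    exact absurd (hx a h0) (not_le.2 hac)
  · rfl

theorem rowM_mem {i : Fin n} {x : Fin n → ℂ} (hx : ∀ a, x a ≠ 0 → b i ≤ b a) : rowM i x ∈ blkSub b := by
  intro a c hac
  rw [rowM_apply]
  split_ifs with h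
  · subst h
    by_contra h0
    exact absurd (hx c h0) (not_le.2 hac)
  · rfl

def cfr (i : Fin n) (x d : Fin n → ℂ) : Matrix (Fin n) (Fin n) ℂ := diagonal d + colM i (fun a => x a * (d i - d a))
def rfr (i : Fin n) (x d : Fin n → ℂ) : Matrix (Fin n) (Fin n) ℂ := diagonal d + rowM i (fun a => x a * (d i - d a))

theorem blk_one : (1 : Matrix (Fin n) (Fin n) ℂ) ∈ blkSub b := Matrix.blockTriangular_one

theorem cfr_frame {i : Fin n} {x : Fin n → ℂ} (hx : ∀ a, x a ≠ 0 → b a ≤ b i) (hi : x i = 0) :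
    Fr b (1 + colM i x) (1 - colM i x) ∧ ∀ d, (1 + colM i x) * diagonal d * (1 - colM i x) = cfr i x d := by
  have h0 : colM i x * colM i x = 0 := by rw [colM_mul_colM, hi, zero_smul]
  refine ⟨⟨(blkSub b).add_mem blk_one (colM_mem hx), (blkSub b).sub_mem blk_one (colM_mem hx), ?_, ?_⟩, ?_⟩
  · simp only [add_mul, mul_sub, mul_one, one_mul, h0]; abel
  · simp only [sub_mul, mul_add, mul_one, one_mul, h0]; abel
  · intro d
    simp only [add_mul, mul_sub, mul_one, one_mul, colM_mul_diag, diag_mul_colM, Matrix.smul_mul, h0, smul_zero]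
    unfold cfr
    ext a c
    simp only [Matrix.add_apply, Matrix.sub_apply, Matrix.smul_apply, colM_apply, smul_eq_mul, Matrix.zero_apply]
    split_ifs <;> ring

theorem rfr_frame {i : Fin n} {x : Fin n → ℂ} (hx : ∀ a, x a ≠ 0 → b i ≤ b a) (hi : x i = 0) :
    Fr b (1 - rowM i x) (1 + rowM i x) ∧ ∀ d, (1 - rowM i x) * diagonal d * (1 + rowM i x) = rfr i x d := by
  have h0 : rowM i x * rowM i x = 0 := by rw [rowM_mul_rowM, hi, zero_smul]
  refine ⟨⟨(blkSub b).sub_mem blk_one (rowM_mem hx), (blkSub b).add_mem blk_one (rowM_mem hx), ?_, ?_⟩, ?_⟩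
  · simp only [sub_mul, mul_add, mul_one, one_mul, h0]; abel
  · simp only [add_mul, mul_sub, mul_one, one_mul, h0]; abel
  · intro d
    simp only [sub_mul, mul_add, mul_one, one_mul, diag_mul_rowM, rowM_mul_diag, mul_assoc, Matrix.mul_smul, h0, smul_zero]
    simp only [rowM_mul_rowM, hi, zero_mul, zero_smul, sub_zero]
    unfold rfr
    ext a c
    simp only [Matrix.add_apply, Matrix.sub_apply, Matrix.smul_apply, rowM_apply, smul_eq_mul, Matrix.zero_apply]
    split_ifs <;> ring

/-- simultaneous diagonalizable family -/
def LinFr (f : (Fin n → ℂ) → Matrix (Fin n) (Fin n) ℂ) : Prop :=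
  ∃ T T' : Matrix (Fin n) (Fin n) ℂ, T * T' = 1 ∧ T' * T = 1 ∧ ∀ d, f d = T * diagonal d * T'

theorem LinFr.mul {f : (Fin n → ℂ) → Matrix (Fin n) (Fin n) ℂ} (h : LinFr f) (d d') :
    f d * f d' = f (fun i => d i * d' i) := by
  obtain ⟨T, T', h1, h2, h3⟩ := h
  rw [h3, h3, h3, ← Matrix.diagonal_mul_diagonal]
  calc _ = T * diagonal d * (T' * T) * diagonal d' * T' := by simp only [mul_assoc]
    _ = _ := by rw [h2]; simp only [mul_assoc, one_mul]

theorem LinFr.add {f : (Fin n → ℂ) → Matrix (Fin n) (Fin n) ℂ} (h : LinFr f) (d d') :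
    f (d + d') = f d + f d' := by
  obtain ⟨T, T', h1, h2, h3⟩ := h
  rw [h3, h3, h3, ← add_mul, ← mul_add, Matrix.diagonal_add]; rfl

theorem LinFr.smul {f : (Fin n → ℂ) → Matrix (Fin n) (Fin n) ℂ} (h : LinFr f) (z : ℂ) (d) :
    f (z • d) = z • f d := by
  obtain ⟨T, T', h1, h2, h3⟩ := h
  rw [h3, h3, ← Matrix.smul_mul, ← Matrix.mul_smul, ← Matrix.diagonal_smul]

theorem LinFr.zero {f : (Fin n → ℂ) → Matrix (Fin n) (Fin n) ℂ} (h : LinFr f) : f 0 = 0 := by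
  have := h.smul 0 0
  simpa using this

theorem LinFr.orth {f : (Fin n → ℂ) → Matrix (Fin n) (Fin n) ℂ} (h : LinFr f) {i j : Fin n} (hij : i ≠ j) :
    f (ee i) * f (ee j) = 0 := by
  rw [h.mul, ← h.zero]
  congr 1
  funext a
  simp only [ee_apply, Pi.zero_apply]
  by_cases h1 : a = i
  · subst h1; simp [hij]
  · simp [h1]

theorem LinFr.idem {f : (Fin n → ℂ) → Matrix (Fin n) (Fin n) ℂ} (h : LinFr f) (i : Fin n) :
    f (ee i) * f (ee i) = f (ee i) := by
  rw [h.mul]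
  congr 1
  funext a
  simp [ee_apply]

theorem LinFr.trace {f : (Fin n → ℂ) → Matrix (Fin n) (Fin n) ℂ} (h : LinFr f) (i : Fin n) :
    (f (ee i)).trace = 1 := by
  obtain ⟨T, T', h1, h2, h3⟩ := h
  rw [h3, Matrix.trace_mul_comm, ← mul_assoc, h2, one_mul, Matrix.trace_diagonal]
  simp [ee_apply]

theorem HH.cfr (h : HH b φ) {i : Fin n} {x : Fin n → ℂ} (hx : ∀ a, x a ≠ 0 → b a ≤ b i) (hi : x i = 0) :
    LinFr (fun d => φ (cfr i x d)) := by
  obtain ⟨h1, h2⟩ := cfr_frame (b := b) hx hi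
  obtain ⟨T, T', h3, h4, h5⟩ := frame (Fin.pos i) h h1
  refine ⟨T, T', h3, h4, fun d => ?_⟩
  show φ _ = _
  rw [← h2, h5]

theorem HH.rfr (h : HH b φ) {i : Fin n} {x : Fin n → ℂ} (hx : ∀ a, x a ≠ 0 → b i ≤ b a) (hi : x i = 0) :
    LinFr (fun d => φ (rfr i x d)) := by
  obtain ⟨h1, h2⟩ := rfr_frame (b := b) hx hi
  obtain ⟨T, T', h3, h4, h5⟩ := frame (Fin.pos i) h h1
  refine ⟨T, T', h3, h4, fun d => ?_⟩
  show φ _ = _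
  rw [← h2, h5]

def Fm (i j : Fin n) (t : ℂ) : Matrix (Fin n) (Fin n) ℂ := diagonal (ee i) + rowM i (Pi.single j t)
def Gm (i j : Fin n) (t : ℂ) : Matrix (Fin n) (Fin n) ℂ := diagonal (ee j) + rowM i (Pi.single j t)

theorem Fm_apply (i j : Fin n) (t : ℂ) (a c) : Fm i j t a c =
    (if a = c then (if a = i then 1 else 0) else 0) + if a = i then (if c = j then t else 0) else 0 := by
  simp [Fm, rowM_apply, diagonal_apply, ee_apply, Pi.single_apply]

theorem Gm_apply (i j : Fin n) (t : ℂ) (a c) : Gm i j t a c =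
    (if a = c then (if a = j then 1 else 0) else 0) + if a = i then (if c = j then t else 0) else 0 := by
  simp [Gm, rowM_apply, diagonal_apply, ee_apply, Pi.single_apply]

theorem cfr_ee_ne {i k : Fin n} (x) (hk : k ≠ i) : cfr i x (ee k) = Fm k i (- x k) := by
  ext a c
  simp only [cfr, Fm_apply, Matrix.add_apply, colM_apply, diagonal_apply, ee_apply, hk.symm, if_false]
  by_cases h1 : c = i <;> by_cases h2 : a = k <;> simp [h1, h2]

theorem rfr_ee_ne {i k : Fin n} (x) (hk : k ≠ i) : rfr i x (ee k) = Gm i k (- x k) := by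
  ext a c
  simp only [rfr, Gm_apply, Matrix.add_apply, rowM_apply, diagonal_apply, ee_apply, hk.symm, if_false]
  by_cases h1 : a = i <;> by_cases h2 : c = k <;> simp [h1, h2]

theorem cfr_ee {i : Fin n} {x : Fin n → ℂ} (hi : x i = 0) : cfr i x (ee i) = diagonal (ee i) + colM i x := by
  ext a c
  simp only [cfr, Matrix.add_apply, colM_apply, diagonal_apply, ee_apply]
  by_cases h1 : c = i <;> by_cases h2 : a = i <;> simp [h1, h2, hi]

theorem rfr_ee {i : Fin n} {x : Fin n → ℂ} (hi : x i = 0) : rfr i x (ee i) = diagonal (ee i) + rowM i x := by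
  ext a c
  simp only [rfr, Matrix.add_apply, rowM_apply, diagonal_apply, ee_apply]
  by_cases h1 : c = i <;> by_cases h2 : a = i <;> simp [h1, h2, hi]

theorem Fm_zero (i j : Fin n) : Fm i j 0 = diagonal (ee i) := by
  ext a c
  simp [Fm_apply, diagonal_apply, ee_apply]

theorem Gm_zero (i j : Fin n) : Gm i j 0 = diagonal (ee j) := by
  ext a c
  simp [Gm_apply, diagonal_apply, ee_apply]

theorem Fm_mem {i j : Fin n} (hij : b i ≤ b j) (t : ℂ) : Fm i j t ∈ blkSub b := by
  refine (blkSub b).add_mem (blk_diag _) (rowM_mem ?_)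
  intro a ha
  by_cases h : a = j
  · subst h; exact hij
  · simp [h] at ha

theorem Gm_mem {i j : Fin n} (hij : b i ≤ b j) (t : ℂ) : Gm i j t ∈ blkSub b := by
  refine (blkSub b).add_mem (blk_diag _) (rowM_mem ?_)
  intro a ha
  by_cases h : a = j
  · subst h; exact hij
  · simp [h] at ha

structure Good (b : Fin n → ℕ) (φ : Matrix (Fin n) (Fin n) ℂ → Matrix (Fin n) (Fin n) ℂ) : Prop extends HH b φ where
  diag : ∀ d, φ (diagonal d) = diagonal d

theorem Good.transp (h : Good b φ) : Good b (fun X => (φ X)ᵀ) :=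
  ⟨h.toHH.transp, fun d => by simp [h.diag]⟩

/-- idempotent of trace one supported on `{i,j}²` -/
structure Sup (Q : Matrix (Fin n) (Fin n) ℂ) (i j : Fin n) : Prop where
  ne : i ≠ j
  r : ∀ a c, a ≠ i → a ≠ j → Q a c = 0
  c : ∀ a c, c ≠ i → c ≠ j → Q a c = 0
  tr : Q i i + Q j j = 1
  dt : Q i i * Q j j = Q i j * Q j i

theorem sup_of {Q : Matrix (Fin n) (Fin n) ℂ} {i j : Fin n} (hij : i ≠ j) (hr : ∀ k, k ≠ i → k ≠ j → diagonal (ee k) * Q = 0)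
    (hc : ∀ k, k ≠ i → k ≠ j → Q * diagonal (ee k) = 0) (hid : Q * Q = Q) (htr : Q.trace = 1) : Sup Q i j := by
  have r : ∀ a c, a ≠ i → a ≠ j → Q a c = 0 := by
    intro a c h1 h2
    have := congrFun (congrFun (hr a h1 h2) a) c
    simpa [Matrix.diagonal_mul, ee_apply] using this
  have c : ∀ a c, c ≠ i → c ≠ j → Q a c = 0 := by
    intro a c h1 h2
    have := congrFun (congrFun (hc c h1 h2) a) c
    simpa [Matrix.mul_diagonal, ee_apply] using this
  have tr : Q i i + Q j j = 1 := by
    rw [← htr, Matrix.trace]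
    rw [Finset.sum_eq_add i j hij]
    · rfl
    · intro k _ hk; exact r k k hk.1 hk.2
    · simp
    · simp
  refine ⟨hij, r, c, tr, ?_⟩
  have h1 := congrFun (congrFun hid i) i
  rw [Matrix.mul_apply, Finset.sum_eq_add i j hij (by intro k _ hk; simp [r k i hk.1 hk.2]) (by simp) (by simp)] at h1
  linear_combination Q i i * tr - h1

theorem sup_ext {Q R : Matrix (Fin n) (Fin n) ℂ} {i j : Fin n} (hQ : Sup Q i j)
    (hr : ∀ a c, a ≠ i → a ≠ j → R a c = 0) (hc : ∀ a c, c ≠ i → c ≠ j → R a c = 0)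
    (h1 : Q i i = R i i) (h2 : Q i j = R i j) (h3 : Q j i = R j i) (h4 : Q j j = R j j) : Q = R := by
  ext a c
  by_cases ha : a = i
  · by_cases hci : c = i
    · rw [ha, hci, h1]
    · by_cases hcj : c = j
      · rw [ha, hcj, h2]
      · rw [hQ.c _ _ hci hcj, hc _ _ hci hcj]
  · by_cases haj : a = j
    · by_cases hci : c = i
      · rw [haj, hci, h3]
      · by_cases hcj : c = j
        · rw [haj, hcj, h4]
        · rw [hQ.c _ _ hci hcj, hc _ _ hci hcj]
    · rw [hQ.r _ _ ha haj, hr _ _ ha haj]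

theorem sup_ne {Q : Matrix (Fin n) (Fin n) ℂ} {i j : Fin n} (hQ : Sup Q i j) (hne : Q ≠ diagonal (ee i)) :
    ¬ (Q j j = 0 ∧ Q i j = 0 ∧ Q j i = 0) := by
  rintro ⟨h1, h2, h3⟩
  apply hne
  have hij := hQ.ne
  refine sup_ext hQ ?_ ?_ ?_ ?_ ?_ ?_
  · intro a c h1 h2; simp [diagonal_apply, ee_apply, h1]
  · intro a c h1 h2
    by_cases h : a = c
    · subst h; simp [diagonal_apply, ee_apply, h1]
    · simp [diagonal_apply, h]
  · have := hQ.tr; simp [ee_apply]; rw [← this, h1, add_zero]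
  · rw [h2]; simp [diagonal_apply, hij]
  · rw [h3]; simp [diagonal_apply, hij.symm]
  · rw [h1]; simp [ee_apply, hij.symm]

theorem lem4b {Q R : Matrix (Fin n) (Fin n) ℂ} {i j k : Fin n} (hik : i ≠ k) (hQ : Sup Q i j) (hR : Sup R k j)
    (h1 : Q * R = 0) (h2 : R * Q = 0) (hQ0 : Q ≠ diagonal (ee i)) (hR0 : R ≠ diagonal (ee k)) :
    Q j j = 0 ∧ R j j = 0 ∧ ((Q j i = 0 ∧ R j k = 0 ∧ Q i j ≠ 0 ∧ R k j ≠ 0) ∨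
      (Q i j = 0 ∧ R k j = 0 ∧ Q j i ≠ 0 ∧ R j k ≠ 0)) := by
  have m1 : ∀ a c, Q a j * R j c = 0 := by
    intro a c
    have := congrFun (congrFun h1 a) c
    rw [Matrix.mul_apply, Finset.sum_eq_single j] at this
    · exact this
    · intro m _ hm
      by_cases hmi : m = i
      · rw [hR.r m c (by rw [hmi]; exact hik) hm, mul_zero]
      · rw [hQ.c a m hmi hm, zero_mul]
    · simp
  have m2 : ∀ a c, R a j * Q j c = 0 := by
    intro a c
    have := congrFun (congrFun h2 a) c
    rw [Matrix.mul_apply, Finset.sum_eq_single j] at this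
    · exact this
    · intro m _ hm
      by_cases hmi : m = i
      · rw [hR.c a m (by rw [hmi]; exact hik) hm, zero_mul]
      · rw [hQ.r m c hmi hm, mul_zero]
    · simp
  have nQ := sup_ne hQ hQ0
  have nR := sup_ne hR hR0
  have a1 : Q j j = 0 := by
    by_contra h
    apply nR
    exact ⟨(mul_eq_zero.1 (m1 j j)).resolve_left h, (mul_eq_zero.1 (m2 k j)).resolve_right h,
      (mul_eq_zero.1 (m1 j k)).resolve_left h⟩
  have a2 : R j j = 0 := by
    by_contra h
    apply nQ
    exact ⟨(mul_eq_zero.1 (m1 j j)).resolve_right h, (mul_eq_zero.1 (m1 i j)).resolve_right h,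
      (mul_eq_zero.1 (m2 j i)).resolve_left h⟩
  refine ⟨a1, a2, ?_⟩
  have d1 := hQ.dt
  have d2 := hR.dt
  rw [a1, mul_zero] at d1
  rw [a2, mul_zero] at d2
  by_cases h : Q i j = 0
  · right
    have h' : Q j i ≠ 0 := fun h' => nQ ⟨a1, h, h'⟩
    have h'' : R k j = 0 := (mul_eq_zero.1 (m2 k i)).resolve_right h'
    exact ⟨h, h'', h', fun h3 => nR ⟨a2, h'', h3⟩⟩
  · left
    have h' : Q j i = 0 := (mul_eq_zero.1 d1.symm).resolve_left h
    have h'' : R j k = 0 := (mul_eq_zero.1 (m1 i k)).resolve_left h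
    exact ⟨h', h'', h, fun h3 => nR ⟨a2, h3, h''⟩⟩

end P4
end Part4

section Part5
open Matrix Topology
open Set hiding diagonal

section P5
set_option linter.all false
variable {n : ℕ} {b : Fin n → ℕ} {φ : Matrix (Fin n) (Fin n) ℂ → Matrix (Fin n) (Fin n) ℂ}

theorem colM_single_eq (i j : Fin n) (t : ℂ) : colM j (Pi.single i t) = rowM i (Pi.single j t) := by
  ext a c
  simp only [colM_apply, rowM_apply, Pi.single_apply]
  split_ifs <;> rfl

theorem single_val {i j : Fin n} (hij : b i ≤ b j) (t : ℂ) : ∀ a, (Pi.single i t : Fin n → ℂ) a ≠ 0 → b a ≤ b j := by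
  intro a ha
  by_cases h : a = i
  · rw [h]; exact hij
  · simp [h] at ha

theorem single_val' {i j : Fin n} (hij : b i ≤ b j) (t : ℂ) : ∀ a, (Pi.single j t : Fin n → ℂ) a ≠ 0 → b i ≤ b a := by
  intro a ha
  by_cases h : a = j
  · rw [h]; exact hij
  · simp [h] at ha

theorem Good.FG (h : Good b φ) {i j : Fin n} (hne : i ≠ j) (hij : b i ≤ b j) (t : ℂ) :
    Sup (φ (Fm i j t)) i j ∧ Sup (φ (Gm i j (-t))) j i ∧
      φ (Fm i j t) + φ (Gm i j (-t)) = diagonal (ee i + ee j) := by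
  have hx0 : (Pi.single i (-t) : Fin n → ℂ) j = 0 := by simp [hne.symm]
  have hf := h.toHH.cfr (single_val hij (-t)) hx0
  have e1 : cfr j (Pi.single i (-t)) (ee i) = Fm i j t := by
    rw [cfr_ee_ne _ hne]; simp
  have e2 : cfr j (Pi.single i (-t)) (ee j) = Gm i j (-t) := by
    rw [cfr_ee hx0, colM_single_eq]; rfl
  have e3 : ∀ k, k ≠ i → k ≠ j → cfr j (Pi.single i (-t)) (ee k) = diagonal (ee k) := by
    intro k h1 h2
    rw [cfr_ee_ne _ h2]
    simp [h1, Fm_zero]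
  have e4 : cfr j (Pi.single i (-t)) (ee i + ee j) = diagonal (ee i + ee j) := by
    unfold cfr
    rw [add_eq_left]
    ext a c
    simp only [colM_apply, Matrix.zero_apply, Pi.add_apply, ee_apply, Pi.single_apply]
    by_cases h1 : a = i <;> simp [h1, hne, hne.symm]
  refine ⟨?_, ?_, ?_⟩
  · refine sup_of hne ?_ ?_ ?_ ?_
    · intro k h1 h2
      have := hf.orth h1
      simp only [e1, e3 k h1 h2, h.diag] at this
      exact this
    · intro k h1 h2
      have := hf.orth (Ne.symm h1)
      simp only [e1, e3 k h1 h2, h.diag] at this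
      exact this
    · have := hf.idem i
      simpa only [e1] using this
    · have := hf.trace i
      simpa only [e1] using this
  · refine sup_of hne.symm ?_ ?_ ?_ ?_
    · intro k h2 h1
      have := hf.orth h2
      simp only [e2, e3 k h1 h2, h.diag] at this
      exact this
    · intro k h2 h1
      have := hf.orth (Ne.symm h2)
      simp only [e2, e3 k h1 h2, h.diag] at this
      exact this
    · have := hf.idem j
      simpa only [e2] using this
    · have := hf.trace j
      simpa only [e2] using this
  · have := hf.add (ee i) (ee j)
    simp only [e1, e2, e4, h.diag] at this
    exact this.symm

theorem Good.Forth (h : Good b φ) {i j k : Fin n} (hij : i ≠ j) (hkj : k ≠ j) (hik : i ≠ k) (vi : b i ≤ b j) (vk : b k ≤ b j)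
    (t s : ℂ) : φ (Fm i j t) * φ (Fm k j s) = 0 := by
  have hx0 : (Pi.single i (-t) + Pi.single k (-s) : Fin n → ℂ) j = 0 := by simp [hij.symm, hkj.symm]
  have hv : ∀ a, (Pi.single i (-t) + Pi.single k (-s) : Fin n → ℂ) a ≠ 0 → b a ≤ b j := by
    intro a ha
    by_cases h1 : a = i
    · rw [h1]; exact vi
    · by_cases h2 : a = k
      · rw [h2]; exact vk
      · simp [h1, h2] at ha
  have hf := h.toHH.cfr hv hx0
  have e1 : cfr j (Pi.single i (-t) + Pi.single k (-s)) (ee i) = Fm i j t := by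
    rw [cfr_ee_ne _ hij]; simp [hik]
  have e2 : cfr j (Pi.single i (-t) + Pi.single k (-s)) (ee k) = Fm k j s := by
    rw [cfr_ee_ne _ hkj]; simp [hik.symm]
  have := hf.orth hik
  simpa only [e1, e2] using this

theorem Good.Gorth (h : Good b φ) {i j k : Fin n} (hij : i ≠ j) (hik : i ≠ k) (hjk : j ≠ k) (vi : b i ≤ b j) (vk : b i ≤ b k)
    (t s : ℂ) : φ (Gm i j t) * φ (Gm i k s) = 0 := by
  have hx0 : (Pi.single j (-t) + Pi.single k (-s) : Fin n → ℂ) i = 0 := by simp [hij, hik]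
  have hv : ∀ a, (Pi.single j (-t) + Pi.single k (-s) : Fin n → ℂ) a ≠ 0 → b i ≤ b a := by
    intro a ha
    by_cases h1 : a = j
    · rw [h1]; exact vi
    · by_cases h2 : a = k
      · rw [h2]; exact vk
      · simp [h1, h2] at ha
  have hf := h.toHH.rfr hv hx0
  have e1 : rfr i (Pi.single j (-t) + Pi.single k (-s)) (ee j) = Gm i j t := by
    rw [rfr_ee_ne _ hij.symm]; simp [hjk]
  have e2 : rfr i (Pi.single j (-t) + Pi.single k (-s)) (ee k) = Gm i k s := by
    rw [rfr_ee_ne _ hik.symm]; simp [hjk.symm]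
  have := hf.orth hjk
  simpa only [e1, e2] using this

theorem Good.F_ne (h : Good b φ) {i j : Fin n} (hne : i ≠ j) (hij : b i ≤ b j) {t : ℂ} (ht : t ≠ 0) :
    φ (Fm i j t) ≠ diagonal (ee i) := by
  intro he
  rw [← h.diag] at he
  have := h.inj (Fm_mem hij t) (blk_diag _) he
  have := congrFun (congrFun this i) j
  simp [Fm_apply, hne] at this
  exact ht this

theorem Good.G_ne (h : Good b φ) {i j : Fin n} (hne : i ≠ j) (hij : b i ≤ b j) {t : ℂ} (ht : t ≠ 0) :
    φ (Gm i j t) ≠ diagonal (ee j) := by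
  intro he
  rw [← h.diag] at he
  have := h.inj (Gm_mem hij t) (blk_diag _) he
  have := congrFun (congrFun this i) j
  simp [Gm_apply, hne] at this
  exact ht this

def st (φ : Matrix (Fin n) (Fin n) ℂ → Matrix (Fin n) (Fin n) ℂ) (i j : Fin n) (t : ℂ) : Prop :=
  φ (Fm i j t) j j = 0 ∧ φ (Fm i j t) j i = 0 ∧ φ (Fm i j t) i j ≠ 0

def trs (φ : Matrix (Fin n) (Fin n) ℂ → Matrix (Fin n) (Fin n) ℂ) (i j : Fin n) (t : ℂ) : Prop :=
  φ (Fm i j t) j j = 0 ∧ φ (Fm i j t) i j = 0 ∧ φ (Fm i j t) j i ≠ 0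

theorem Good.colrule (h : Good b φ) {i j k : Fin n} (hij : i ≠ j) (hkj : k ≠ j) (hik : i ≠ k) (vi : b i ≤ b j) (vk : b k ≤ b j)
    {t s : ℂ} (ht : t ≠ 0) (hs : s ≠ 0) : (st φ i j t ∧ st φ k j s) ∨ (trs φ i j t ∧ trs φ k j s) := by
  obtain ⟨h1, h2, h3⟩ := lem4b hik (h.FG hij vi t).1 (h.FG hkj vk s).1 (h.Forth hij hkj hik vi vk t s)
    (h.Forth hkj hij hik.symm vk vi s t) (h.F_ne hij vi ht) (h.F_ne hkj vk hs)
  unfold st trs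
  tauto

theorem Good.rowrule (h : Good b φ) {i j k : Fin n} (hij : i ≠ j) (hik : i ≠ k) (hjk : j ≠ k) (vi : b i ≤ b j) (vk : b i ≤ b k)
    {t s : ℂ} (ht : t ≠ 0) (hs : s ≠ 0) : (st φ i j t ∧ st φ i k s) ∨ (trs φ i j t ∧ trs φ i k s) := by
  obtain ⟨h1, h2, h3⟩ := lem4b hjk (h.FG hij vi t).2.1 (h.FG hik vk s).2.1 (h.Gorth hij hik hjk vi vk _ _)
    (h.Gorth hik hij hjk.symm vk vi _ _) (h.G_ne hij vi (neg_ne_zero.2 ht)) (h.G_ne hik vk (neg_ne_zero.2 hs))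
  have aux : ∀ {j : Fin n} {t : ℂ}, i ≠ j → b i ≤ b j → φ (Gm i j (-t)) i i = 0 →
      (φ (Gm i j (-t)) j i = - φ (Fm i j t) j i ∧ φ (Gm i j (-t)) i j = - φ (Fm i j t) i j ∧ φ (Fm i j t) j j = 0) := by
    intro j t hij vi h0
    have hs := (h.FG hij vi t).2.2
    have g1 := congrFun (congrFun hs j) i
    have g2 := congrFun (congrFun hs i) j
    have g3 := congrFun (congrFun hs i) i
    have g4 := (h.FG hij vi t).1.tr
    simp [hij, hij.symm, ee_apply] at g1 g2 g3
    refine ⟨by linear_combination g1, by linear_combination g2, by linear_combination g4 - g3 + h0⟩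
  obtain ⟨p1, p2, p3⟩ := aux hij vi h1
  obtain ⟨q1, q2, q3⟩ := aux hik vk h2
  rw [p1, p2, q1, q2] at h3
  simp only [neg_eq_zero, ne_eq] at h3
  unfold st trs
  simp only [ne_eq]
  tauto

theorem st_not_trs {i j : Fin n} {t : ℂ} (h1 : st φ i j t) (h2 : trs φ i j t) : False := h1.2.2 h2.2.1

theorem Good.alltype (hn : 3 ≤ n) (hb : Monotone b) (h : Good b φ) :
    (∀ i j t, i ≠ j → b i ≤ b j → t ≠ 0 → st φ i j t) ∨ (∀ i j t, i ≠ j → b i ≤ b j → t ≠ 0 → trs φ i j t) := by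
  let r : Fin n := ⟨n - 1, by omega⟩
  have hr : ∀ i, b i ≤ b r := fun i => hb (Fin.le_def.2 (by simp only [r]; omega))
  let z : Fin n := ⟨0, by omega⟩
  let o : Fin n := ⟨1, by omega⟩
  have hzr : z ≠ r := by simp [z, r, Fin.ext_iff]; omega
  have hor : o ≠ r := by simp [o, r, Fin.ext_iff]; omega
  have hzo : z ≠ o := by simp [o, z, Fin.ext_iff]
  have one : (1:ℂ) ≠ 0 := one_ne_zero
  let rel : Fin n → Fin n → ℂ → Prop := fun i j t =>
    (st φ z r 1 ∧ st φ i j t) ∨ (trs φ z r 1 ∧ trs φ i j t)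
  have trans : ∀ {i j t i' j' t'}, rel i j t → ((st φ i' j' t' ∧ st φ i j t) ∨ (trs φ i' j' t' ∧ trs φ i j t)) →
      rel i' j' t' := by
    intro i j t i' j' t' h1 h2
    rcases h1 with ⟨a1, a2⟩ | ⟨a1, a2⟩ <;> rcases h2 with ⟨b1, b2⟩ | ⟨b1, b2⟩
    · exact Or.inl ⟨a1, b1⟩
    · exact (st_not_trs a2 b2).elim
    · exact (st_not_trs b2 a2).elim
    · exact Or.inr ⟨a1, b1⟩
  have hzz : rel z r 1 := by
    rcases h.colrule hzr hor hzo (hr _) (hr _) one one with h1 | h1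
    · exact Or.inl ⟨h1.1, h1.1⟩
    · exact Or.inr ⟨h1.1, h1.1⟩
  have s1 : ∀ i t, i ≠ r → t ≠ 0 → rel i r t := by
    intro i t hi ht
    by_cases hiz : i = z
    · subst hiz
      exact trans (trans hzz (h.colrule hor hi hzo.symm (hr _) (hr _) one one)) (h.colrule hi hor hzo (hr _) (hr _) ht one)
    · exact trans hzz (h.colrule hi hzr hiz (hr _) (hr _) ht one)
  have s2 : ∀ i j t, i ≠ j → i ≠ r → b i ≤ b j → t ≠ 0 → rel i j t := by
    intro i j t hij hi hv ht
    by_cases hj : j = r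
    · subst hj; exact s1 i t hi ht
    · exact trans (s1 i 1 hi one) (h.rowrule hij hi hj hv (hr _) ht one)
  have s3 : ∀ i j t, i ≠ j → b i ≤ b j → t ≠ 0 → rel i j t := by
    intro i j t hij hv ht
    by_cases hi : i = r
    · obtain ⟨k, hk1, hk2⟩ : ∃ k, k ≠ j ∧ k ≠ i := by
        by_cases hzj : z = j
        · exact ⟨o, by rw [← hzj]; exact hzo.symm, by rw [hi]; exact hor⟩
        · exact ⟨z, hzj, by rw [hi]; exact hzr⟩
      have vk : b k ≤ b j := (hr k).trans (hi ▸ hv)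
      exact trans (s2 k j 1 hk1 (hi ▸ hk2) vk one) (h.colrule hij hk1 hk2.symm hv vk ht one)
    · exact s2 i j t hij hi hv ht
  rcases hzz with ⟨h1, -⟩ | ⟨h1, -⟩
  · left
    intro i j t a1 a2 a3
    rcases s3 i j t a1 a2 a3 with ⟨c1, c2⟩ | ⟨c1, c2⟩
    · exact c2
    · exact (st_not_trs h1 c1).elim
  · right
    intro i j t a1 a2 a3
    rcases s3 i j t a1 a2 a3 with ⟨c1, c2⟩ | ⟨c1, c2⟩
    · exact (st_not_trs c1 h1).elim
    · exact c2

/-- straight good maps -/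
structure SGood (b : Fin n → ℕ) (φ : Matrix (Fin n) (Fin n) ℂ → Matrix (Fin n) (Fin n) ℂ) : Prop extends Good b φ where
  str : ∀ i j t, i ≠ j → b i ≤ b j → t ≠ 0 → st φ i j t

theorem Good.dich (hn : 3 ≤ n) (hb : Monotone b) (h : Good b φ) : SGood b φ ∨ SGood b (fun X => (φ X)ᵀ) := by
  rcases h.alltype hn hb with h1 | h1
  · exact Or.inl ⟨h, h1⟩
  · exact Or.inr ⟨h.transp, h1⟩

/-- off-diagonal coefficient -/
def al (φ : Matrix (Fin n) (Fin n) ℂ → Matrix (Fin n) (Fin n) ℂ) (i j : Fin n) (t : ℂ) : ℂ := φ (Fm i j t) i j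

theorem SGood.F (h : SGood b φ) {i j : Fin n} (hne : i ≠ j) (t : ℂ) (hij : b i ≤ b j ∨ t = 0) :
    φ (Fm i j t) = Fm i j (al φ i j t) := by
  by_cases ht : t = 0
  · subst ht
    unfold al
    rw [Fm_zero, h.diag, diagonal_apply_ne _ hne, Fm_zero]
  · have hij := hij.resolve_right ht
    obtain ⟨h1, h2, h3⟩ := h.str i j t hne hij ht
    have hS := (h.FG hne hij t).1
    refine sup_ext hS ?_ ?_ ?_ ?_ ?_ ?_
    · intro a c h1 h2; simp [Fm_apply, h1]
    · intro a c k1 k2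
      by_cases h : a = i
      · subst h; simp [Fm_apply, k2, Ne.symm k1]
      · simp [Fm_apply, h]
    · have := hS.tr
      rw [h1, add_zero] at this
      rw [this]; simp [Fm_apply, hne]
    · simp [Fm_apply, hne, al]
    · rw [h2]; simp [Fm_apply, hne.symm]
    · rw [h1]; simp [Fm_apply, hne.symm]

theorem SGood.G (h : SGood b φ) {i j : Fin n} (hne : i ≠ j) (t : ℂ) (hij : b i ≤ b j ∨ t = 0) :
    φ (Gm i j t) = Gm i j (- al φ i j (-t)) := by
  by_cases ht : t = 0
  · subst ht
    unfold al
    rw [neg_zero, Fm_zero, Gm_zero, h.diag, h.diag, diagonal_apply_ne _ hne, neg_zero, Gm_zero]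
  · have hij := hij.resolve_right ht
    have h1 := (h.FG hne hij (-t)).2.2
    rw [neg_neg, h.F hne (-t) (Or.inl hij)] at h1
    rw [eq_sub_of_add_eq' h1]
    ext a c
    simp only [Matrix.sub_apply, Fm_apply, Gm_apply, diagonal_apply, Pi.add_apply, ee_apply]
    split_ifs <;> ring

theorem SGood.al_ne (h : SGood b φ) {i j : Fin n} (hne : i ≠ j) (hij : b i ≤ b j) {t : ℂ} (ht : t ≠ 0) :
    al φ i j t ≠ 0 := (h.str i j t hne hij ht).2.2

theorem SGood.al_zero (h : SGood b φ) {i j : Fin n} (hne : i ≠ j) : al φ i j 0 = 0 := by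
  unfold al; rw [Fm_zero, h.diag, diagonal_apply_ne _ hne]

theorem SGood.col (h : SGood b φ) {i : Fin n} {x : Fin n → ℂ} (hx : ∀ a, x a ≠ 0 → b a ≤ b i) (hi : x i = 0) :
    φ (diagonal (ee i) + colM i x) = diagonal (ee i) + colM i (fun k => if k = i then 0 else - al φ k i (- x k)) := by
  have hf := h.toHH.cfr hx hi
  have hv : ∀ k, b k ≤ b i ∨ -x k = 0 := by
    intro k
    by_cases h0 : x k = 0
    · right; rw [h0, neg_zero]
    · left; exact hx k h0
  set P := φ (diagonal (ee i) + colM i x) with hP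
  have htr : P.trace = 1 := by
    have := hf.trace i
    simpa only [cfr_ee hi] using this
  have h1 : ∀ k, k ≠ i → P * Fm k i (al φ k i (- x k)) = 0 := by
    intro k hk
    have := hf.orth (Ne.symm hk)
    simp only [cfr_ee hi, cfr_ee_ne x hk, h.F hk _ (hv k)] at this
    exact this
  have h2 : ∀ k, k ≠ i → Fm k i (al φ k i (- x k)) * P = 0 := by
    intro k hk
    have := hf.orth hk
    simp only [cfr_ee hi, cfr_ee_ne x hk, h.F hk _ (hv k)] at this
    exact this
  have h3 : ∀ a k, k ≠ i → P a k = 0 := by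
    intro a k hk
    have := congrFun (congrFun (h1 k hk) a) k
    rw [Matrix.mul_apply, Finset.sum_eq_single k] at this
    · simpa [Fm_apply, hk] using this
    · intro m _ hm; simp [Fm_apply, hm]
    · simp
  have h4 : P i i = 1 := by
    rw [← htr, Matrix.trace, Finset.sum_eq_single i]
    · rfl
    · intro k _ hk; exact h3 k k hk
    · simp
  have h5 : ∀ k, k ≠ i → P k i = - al φ k i (- x k) := by
    intro k hk
    have := congrFun (congrFun (h2 k hk) k) i
    rw [Matrix.mul_apply, Finset.sum_eq_add k i hk] at this
    · simp [Fm_apply, hk, hk.symm, h4] at this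
      exact eq_neg_of_add_eq_zero_left this
    · intro m _ hm; simp [Fm_apply, hm.1, hm.2, Ne.symm hm.1]
    · simp
    · simp
  ext a c
  simp only [Matrix.add_apply, colM_apply, diagonal_apply, ee_apply]
  by_cases hc : c = i
  · subst hc
    by_cases ha : a = c
    · subst ha; simp [h4]
    · simp [ha, h5 a ha]
  · rw [h3 a c hc]
    by_cases ha : a = c
    · subst ha; simp [hc]
    · simp [ha, hc]

theorem SGood.row (h : SGood b φ) {i : Fin n} {x : Fin n → ℂ} (hx : ∀ a, x a ≠ 0 → b i ≤ b a) (hi : x i = 0) :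
    φ (diagonal (ee i) + rowM i x) = diagonal (ee i) + rowM i (fun k => if k = i then 0 else al φ i k (x k)) := by
  have hf := h.toHH.rfr hx hi
  have hv : ∀ k, b i ≤ b k ∨ -x k = 0 := by
    intro k
    by_cases h0 : x k = 0
    · right; rw [h0, neg_zero]
    · left; exact hx k h0
  set P := φ (diagonal (ee i) + rowM i x) with hP
  have htr : P.trace = 1 := by
    have := hf.trace i
    simpa only [rfr_ee hi] using this
  have h1 : ∀ k, k ≠ i → P * Gm i k (- al φ i k (x k)) = 0 := by
    intro k hk
    have := hf.orth (Ne.symm hk)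
    simp only [rfr_ee hi, rfr_ee_ne x hk, h.G hk.symm _ (hv k), neg_neg] at this
    exact this
  have h2 : ∀ k, k ≠ i → Gm i k (- al φ i k (x k)) * P = 0 := by
    intro k hk
    have := hf.orth hk
    simp only [rfr_ee hi, rfr_ee_ne x hk, h.G hk.symm _ (hv k), neg_neg] at this
    exact this
  have h3 : ∀ k a, k ≠ i → P k a = 0 := by
    intro k a hk
    have := congrFun (congrFun (h2 k hk) k) a
    rw [Matrix.mul_apply, Finset.sum_eq_single k] at this
    · simpa [Gm_apply, hk] using this
    · intro m _ hm; simp [Gm_apply, hm, hk, hm.symm]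
    · simp
  have h4 : P i i = 1 := by
    rw [← htr, Matrix.trace, Finset.sum_eq_single i]
    · rfl
    · intro k _ hk; exact h3 k k hk
    · simp
  have h5 : ∀ k, k ≠ i → P i k = al φ i k (x k) := by
    intro k hk
    have := congrFun (congrFun (h1 k hk) i) k
    rw [Matrix.mul_apply, Finset.sum_eq_add k i hk] at this
    · simp [Gm_apply, hk, hk.symm, h4] at this
      linear_combination this
    · intro m _ hm; simp [Gm_apply, hm.1, hm.2]
    · simp
    · simp
  ext a c
  simp only [Matrix.add_apply, rowM_apply, diagonal_apply, ee_apply]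
  by_cases hc : a = i
  · subst hc
    by_cases ha : c = a
    · subst ha; simp [h4]
    · simp [ha, Ne.symm ha, h5 c ha]
  · rw [h3 a c hc]
    by_cases ha : a = c
    · subst ha; simp [hc]
    · simp [ha, hc]

end P5
end Part5

section Part6
open Matrix Topology
open Set hiding diagonal

section P6
set_option linter.all false
variable {n : ℕ} {b : Fin n → ℕ} {φ : Matrix (Fin n) (Fin n) ℂ → Matrix (Fin n) (Fin n) ℂ}

theorem colM_ee (i : Fin n) (x) : diagonal (ee i) + colM i x = colM i (ee i + x) := by
  ext a c
  simp only [Matrix.add_apply, colM_apply, diagonal_apply, ee_apply, Pi.add_apply]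
  by_cases h : c = i
  · subst h; simp
  · by_cases h2 : a = c
    · subst h2; simp [h]
    · simp [h, h2]

theorem rowM_ee (i : Fin n) (x) : diagonal (ee i) + rowM i x = rowM i (ee i + x) := by
  ext a c
  simp only [Matrix.add_apply, rowM_apply, diagonal_apply, ee_apply, Pi.add_apply]
  by_cases h : a = i
  · subst h; simp [eq_comm]
  · simp [h]

theorem rowM_mul_colM (i j : Fin n) (x y) : (rowM j y * colM i x) j i = y ⬝ᵥ x := by
  simp [Matrix.mul_apply, rowM_apply, colM_apply, dotProduct]

theorem rowM_mul_colM_zero (i j : Fin n) (x y) (h : y ⬝ᵥ x = 0) : rowM j y * colM i x = 0 := by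
  ext a c
  simp only [Matrix.mul_apply, rowM_apply, colM_apply, Matrix.zero_apply]
  by_cases h1 : a = j <;> by_cases h2 : c = i <;> simp [h1, h2]
  exact h

theorem colM_mul_rowM_zero {i j : Fin n} (hij : i ≠ j) (x y) : colM i x * rowM j y = 0 := by
  ext a c
  simp [Matrix.mul_apply, rowM_apply, colM_apply, hij, hij.symm]

theorem SGood.addmul (h : SGood b φ) {j k i : Fin n} (hjk : j ≠ k) (hki : k ≠ i) (hji : j ≠ i)
    (v1 : b j ≤ b k) (v2 : b k ≤ b i) (s u v : ℂ) :
    al φ j i (s + u * v) = al φ j i s + al φ j k u * al φ k i v := by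
  set x : Fin n → ℂ := Pi.single j (-s) + Pi.single k (-v) with hx
  set y : Fin n → ℂ := Pi.single k u + Pi.single i (s + u * v) with hy
  have hxi : x i = 0 := by simp [hx, hji.symm, hki.symm]
  have hyj : y j = 0 := by simp [hy, hji, hjk]
  have hxv : ∀ a, x a ≠ 0 → b a ≤ b i := by
    intro a ha
    by_cases h1 : a = j
    · rw [h1]; exact v1.trans v2
    · by_cases h2 : a = k
      · rw [h2]; exact v2
      · simp [hx, h1, h2] at ha
  have hyv : ∀ a, y a ≠ 0 → b j ≤ b a := by
    intro a ha
    by_cases h1 : a = i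
    · rw [h1]; exact v1.trans v2
    · by_cases h2 : a = k
      · rw [h2]; exact v1
      · simp [hy, h1, h2] at ha
  have hX : diagonal (ee i) + colM i x ∈ blkSub b := (blkSub b).add_mem (blk_diag _) (colM_mem hxv)
  have hY : diagonal (ee j) + rowM j y ∈ blkSub b := (blkSub b).add_mem (blk_diag _) (rowM_mem hyv)
  have hcm := h.comm _ hX _ hY (by
    rw [colM_ee, rowM_ee, colM_mul_rowM_zero hji.symm, rowM_mul_colM_zero]
    simp only [hx, hy, ee, add_dotProduct, dotProduct_add, single_dotProduct, Pi.single_apply]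
    simp [hjk, hki, hji, hjk.symm, hki.symm, hji.symm]
    ring)
  rw [h.col hxv hxi, h.row hyv hyj, colM_ee, rowM_ee, colM_mul_rowM_zero hji.symm] at hcm
  have h1 := congrFun (congrFun hcm j) i
  rw [rowM_mul_colM] at h1
  have e1 : (ee i + fun m => if m = i then 0 else - al φ m i (- x m)) =
      Pi.single i 1 + Pi.single j (- al φ j i s) + Pi.single k (- al φ k i v) := by
    funext m
    simp only [Pi.add_apply, ee, Pi.single_apply, hx]
    by_cases m1 : m = i
    · subst m1; simp [hji.symm, hki.symm]
    · by_cases m2 : m = j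
      · subst m2; simp [hjk, hji]
      · by_cases m3 : m = k
        · subst m3; simp [hjk.symm, hki]
        · simp [m1, m2, m3, h.al_zero m1]
  have e2 : (ee j + fun m => if m = j then 0 else al φ j m (y m)) =
      Pi.single j 1 + Pi.single k (al φ j k u) + Pi.single i (al φ j i (s + u * v)) := by
    funext m
    simp only [Pi.add_apply, ee, Pi.single_apply, hy]
    by_cases m1 : m = j
    · subst m1; simp [hji, hjk]
    · by_cases m2 : m = i
      · subst m2; simp [hki.symm, hji.symm]
      · by_cases m3 : m = k
        · subst m3; simp [hjk.symm, hki]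
        · simp [m1, m2, m3, h.al_zero (Ne.symm m1)]
  rw [e1, e2] at h1
  simp only [add_dotProduct, dotProduct_add, single_dotProduct, Pi.single_apply, Matrix.zero_apply] at h1
  simp [hjk, hki, hji, hjk.symm, hki.symm, hji.symm] at h1
  linear_combination -h1

theorem SGood.G_smul (h : SGood b φ) {j i : Fin n} (hji : j ≠ i) (hv : b j ≤ b i) (z t : ℂ) :
    φ (z • Gm j i t) = z • φ (Gm j i t) := by
  have hx0 : (Pi.single j t : Fin n → ℂ) i = 0 := by simp [hji.symm]
  have hf := h.toHH.cfr (single_val hv t) hx0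
  have e2 : cfr i (Pi.single j t) (ee i) = Gm j i t := by
    rw [cfr_ee hx0, colM_single_eq]; rfl
  have e3 : cfr i (Pi.single j t) (z • ee i) = z • Gm j i t := by
    rw [← e2]
    ext a c
    simp only [cfr, Matrix.add_apply, Matrix.smul_apply, colM_apply, diagonal_apply, Pi.smul_apply, smul_eq_mul]
    split_ifs <;> ring
  have := hf.smul z (ee i)
  simpa only [e2, e3] using this

theorem SGood.lin_of_add (h : SGood b φ) {j i : Fin n} (hji : j ≠ i) (hv : b j ≤ b i)
    (hadd : ∀ s t, al φ j i (s + t) = al φ j i s + al φ j i t) : ∀ t, al φ j i t = al φ j i 1 * t := by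
  have h0 : al φ j i 0 = 0 := h.al_zero hji
  let α : ℂ →+ ℂ := ⟨⟨al φ j i, h0⟩, hadd⟩
  have hneg : ∀ t, al φ j i (-t) = - al φ j i t := fun t => map_neg α t
  have hns : ∀ (m : ℕ) t, al φ j i (m * t) = m * al φ j i t := fun m t => by
    have := map_nsmul α m t
    simp only [nsmul_eq_mul] at this
    exact this
  let g : ℂ → Matrix (Fin n) (Fin n) ℂ := fun z => diagonal (z • ee i) + rowM j (Pi.single i 1)
  have hgm : ∀ z, g z ∈ blkSub b := fun z => (blkSub b).add_mem (blk_diag _) (rowM_mem (single_val' hv 1))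
  have hgc : Continuous g := by
    have : Continuous (fun z : ℂ => diagonal (z • ee i)) := by
      apply Continuous.matrix_diagonal
      fun_prop
    exact this.add continuous_const
  have hφg : Continuous (fun z => φ (g z) j i) := (h.cont.comp_continuous hgc hgm).matrix_elem j i
  have hval : ∀ z, z ≠ 0 → φ (g z) j i = z * al φ j i z⁻¹ := by
    intro z hz
    have : g z = z • Gm j i z⁻¹ := by
      ext a c
      simp only [g, Matrix.add_apply, Matrix.smul_apply, Gm_apply, rowM_apply, diagonal_apply, Pi.smul_apply, smul_eq_mul,
        ee_apply, Pi.single_apply]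
      split_ifs <;> field_simp <;> simp
    rw [this, h.G_smul hji hv, h.G hji _ (Or.inl hv), hneg, neg_neg]
    simp [Gm_apply, hji]
  have key : ∀ t, al φ j i t = φ (g 0) j i * t := by
    intro t
    by_cases ht : t = 0
    · rw [ht, h0, mul_zero]
    · have hlim : Filter.Tendsto (fun m : ℕ => (((m + 1 : ℕ) : ℂ) * t)⁻¹) Filter.atTop (𝓝 0) := by
        have h1 : Filter.Tendsto (fun m : ℕ => (((m + 1 : ℕ) : ℂ))⁻¹) Filter.atTop (𝓝 0) := by
          have := tendsto_one_div_add_atTop_nhds_zero_nat (𝕜 := ℂ)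
          refine this.congr fun m => ?_
          simp
        have := h1.mul_const t⁻¹
        rw [zero_mul] at this
        refine this.congr fun m => ?_
        rw [mul_inv]
      have h2 := (hφg.tendsto 0).comp hlim
      have h3 : ((fun z => φ (g z) j i) ∘ fun m : ℕ => (((m + 1 : ℕ) : ℂ) * t)⁻¹) = fun m => al φ j i t / t := by
        funext m
        have hm : ((m + 1 : ℕ) : ℂ) ≠ 0 := Nat.cast_ne_zero.2 (Nat.succ_ne_zero m)
        simp only [Function.comp]
        rw [hval _ (inv_ne_zero (mul_ne_zero hm ht)), inv_inv, hns]
        field_simp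
      rw [h3] at h2
      have h4 := tendsto_nhds_unique h2 tendsto_const_nhds
      rw [h4]
      field_simp
  intro t
  rw [key t, key 1, mul_one]

theorem SGood.lin_triple (h : SGood b φ) {j k i : Fin n} (hjk : j ≠ k) (hki : k ≠ i) (hji : j ≠ i)
    (v1 : b j ≤ b k) (v2 : b k ≤ b i) : (∀ t, al φ j i t = al φ j i 1 * t) ∧ (∀ t, al φ j k t = al φ j k 1 * t) ∧
     (∀ t, al φ k i t = al φ k i 1 * t) ∧ al φ j i 1 = al φ j k 1 * al φ k i 1 := by
  have hm : ∀ u v, al φ j i (u * v) = al φ j k u * al φ k i v := by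
    intro u v
    have := h.addmul hjk hki hji v1 v2 0 u v
    rwa [zero_add, h.al_zero hji, zero_add] at this
  have hl := h.lin_of_add hji (v1.trans v2) (by
    intro s t
    have := h.addmul hjk hki hji v1 v2 s t 1
    rw [← hm, mul_one] at this
    exact this)
  have n1 := h.al_ne hjk v1 one_ne_zero
  have n2 := h.al_ne hki v2 one_ne_zero
  have h1 : al φ j i 1 = al φ j k 1 * al φ k i 1 := by rw [← hm, one_mul]
  refine ⟨hl, ?_, ?_, h1⟩
  · intro t
    have := hm t 1
    rw [mul_one, hl, h1] at this
    apply mul_right_cancel₀ n2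
    linear_combination -this
  · intro t
    have := hm 1 t
    rw [one_mul, hl, h1] at this
    apply mul_left_cancel₀ n1
    linear_combination -this

theorem third (hn : 3 ≤ n) (i j : Fin n) : ∃ k, k ≠ i ∧ k ≠ j := by
  have : ∃ k, k ∉ ({i, j} : Finset (Fin n)) := by
    by_contra hc
    push Not at hc
    have h1 : (Finset.univ : Finset (Fin n)) ⊆ {i, j} := fun k _ => hc k
    have h2 := Finset.card_le_card h1
    have h3 := Finset.card_le_two (a := i) (b := j)
    rw [Finset.card_univ, Fintype.card_fin] at h2
    omega
  obtain ⟨k, hk⟩ := this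
  simp at hk
  exact ⟨k, hk.1, hk.2⟩

theorem SGood.lin (hn : 3 ≤ n) (h : SGood b φ) {p q : Fin n} (hpq : p ≠ q) (hv : b p ≤ b q) (t : ℂ) :
    al φ p q t = al φ p q 1 * t := by
  obtain ⟨m, hm1, hm2⟩ := third hn p q
  by_cases h1 : b m ≤ b p
  · exact (h.lin_triple hm1 hpq hm2 h1 hv).2.2.1 t
  · by_cases h2 : b m ≤ b q
    · exact (h.lin_triple hm1.symm hm2 hpq (not_le.1 h1).le h2).1 t
    · exact (h.lin_triple hpq hm2.symm hm1.symm hv (not_le.1 h2).le).2.1 t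

theorem SGood.cob (hn : 3 ≤ n) (hb : Monotone b) (h : SGood b φ) : ∃ C : Fin n → ℂ, (∀ i, C i ≠ 0) ∧
    ∀ i j t, i ≠ j → b i ≤ b j → al φ i j t * C j = C i * t := by
  let r : Fin n := ⟨n - 1, by omega⟩
  have hr : ∀ i, b i ≤ b r := fun i => hb (Fin.le_def.2 (by simp only [r]; omega))
  refine ⟨fun i => if i = r then 1 else al φ i r 1, ?_, ?_⟩
  · intro i
    by_cases hi : i = r
    · simp [hi]
    · simp only [hi, if_false]; exact h.al_ne hi (hr i) one_ne_zero
  · intro i j t hij hv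
    rw [h.lin hn hij hv t]
    by_cases hj : j = r
    · have hi : i ≠ r := hj ▸ hij
      simp only [hj, hi, if_true, if_false, mul_one]
    · by_cases hi : i = r
      · simp only [hi, hj, if_true, if_false]
        obtain ⟨k, hk1, hk2⟩ := third hn r j
        have hv' : b r ≤ b j := hi ▸ hv
        have c1 := (h.lin_triple hk1 (Ne.symm hj) hk2 (hr k) hv').2.2.2
        have c2 := (h.lin_triple hk2 hj hk1 ((hr k).trans hv') (hr j)).2.2.2
        have n1 := h.al_ne hk1 (hr k) (t := 1) one_ne_zero
        rw [c1] at c2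
        have : al φ r j 1 * al φ j r 1 = 1 := by
          apply mul_left_cancel₀ n1
          linear_combination -c2
        linear_combination t * this
      · simp only [hi, hj, if_false]
        have := (h.lin_triple hij hj hi hv (hr j)).2.2.2
        rw [this]; ring

/-- normalized straight maps -/
theorem SGood.normalize (hn : 3 ≤ n) (hb : Monotone b) (h : SGood b φ) : ∃ C : Fin n → ℂ, (∀ i, C i ≠ 0) ∧
    SGood b (fun X => diagonal (fun i => (C i)⁻¹) * φ X * diagonal C) ∧
    ∀ i j t, i ≠ j → b i ≤ b j → al (fun X => diagonal (fun i => (C i)⁻¹) * φ X * diagonal C) i j t = t := by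
  obtain ⟨C, hC, hC2⟩ := h.cob hn hb
  have hCC : diagonal C * diagonal (fun i => (C i)⁻¹) = 1 := by
    rw [Matrix.diagonal_mul_diagonal, ← Matrix.diagonal_one]
    congr 1; funext i; exact mul_inv_cancel₀ (hC i)
  have hH : HH b (fun X => diagonal (fun i => (C i)⁻¹) * φ X * diagonal C) := by
    have := h.toHH.conj Fr.one hCC
    simpa using this
  refine ⟨C, hC, ⟨⟨hH, ?_⟩, ?_⟩, ?_⟩
  · intro d
    rw [h.diag, Matrix.diagonal_mul_diagonal, Matrix.diagonal_mul_diagonal]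
    congr 1; funext i
    have := hC i
    field_simp
  · intro i j t hij hv ht
    obtain ⟨h1, h2, h3⟩ := h.str i j t hij hv ht
    simp only [st, Matrix.mul_diagonal, Matrix.diagonal_mul]
    refine ⟨by rw [h1]; simp, by rw [h2]; simp, ?_⟩
    exact mul_ne_zero (mul_ne_zero (inv_ne_zero (hC i)) h3) (hC j)
  · intro i j t hij hv
    have := hC2 i j t hij hv
    unfold al at this ⊢
    simp only [Matrix.mul_diagonal, Matrix.diagonal_mul]
    rw [mul_assoc, this, ← mul_assoc, inv_mul_cancel₀ (hC i), one_mul]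

end P6
end Part6

section Part7
open Matrix Topology
open Set hiding diagonal

section P7
set_option linter.all false
variable {n : ℕ} {b : Fin n → ℕ} {φ : Matrix (Fin n) (Fin n) ℂ → Matrix (Fin n) (Fin n) ℂ}

theorem SGood.col1 (h : SGood b φ) {i : Fin n} {x : Fin n → ℂ} (hx : ∀ a, x a ≠ 0 → b a ≤ b i) (hi : x i = 1) :
    ∃ x', x' i = 1 ∧ φ (colM i x) = colM i x' ∧ ((∀ i j t, i ≠ j → b i ≤ b j → al φ i j t = t) → x' = x) := by
  have hx' : ∀ a, (x - ee i) a ≠ 0 → b a ≤ b i := by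
    intro a ha
    by_cases h1 : a = i
    · rw [h1]
    · simp [ee_apply, h1] at ha; exact hx a ha
  have := h.col hx' (by simp [hi, ee_apply])
  rw [colM_ee, colM_ee, add_sub_cancel] at this
  refine ⟨_, ?_, this, ?_⟩
  · simp [ee_apply]
  · intro hn
    funext k
    by_cases hk : k = i
    · subst hk; simp [ee_apply, hi]
    · simp only [Pi.add_apply, ee_apply, hk, if_false, Pi.sub_apply, zero_add, sub_zero]
      by_cases h0 : x k = 0
      · rw [h0, neg_zero, h.al_zero hk, neg_zero]
      · rw [hn _ _ _ hk (hx k h0), neg_neg]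

theorem SGood.row1 (h : SGood b φ) {i : Fin n} {x : Fin n → ℂ} (hx : ∀ a, x a ≠ 0 → b i ≤ b a) (hi : x i = 1) :
    ∃ x', x' i = 1 ∧ φ (rowM i x) = rowM i x' ∧ ((∀ i j t, i ≠ j → b i ≤ b j → al φ i j t = t) → x' = x) := by
  have hx' : ∀ a, (x - ee i) a ≠ 0 → b i ≤ b a := by
    intro a ha
    by_cases h1 : a = i
    · rw [h1]
    · simp [ee_apply, h1] at ha; exact hx a ha
  have := h.row hx' (by simp [hi, ee_apply])
  rw [rowM_ee, rowM_ee, add_sub_cancel] at this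
  refine ⟨_, ?_, this, ?_⟩
  · simp [ee_apply]
  · intro hn
    funext k
    by_cases hk : k = i
    · subst hk; simp [ee_apply, hi]
    · simp only [Pi.add_apply, ee_apply, hk, if_false, Pi.sub_apply, zero_add, sub_zero]
      by_cases h0 : x k = 0
      · rw [h0, h.al_zero (Ne.symm hk)]
      · rw [hn _ _ _ (Ne.symm hk) (hx k h0)]

theorem rk1 {T T' P : Matrix (Fin n) (Fin n) ℂ} {i : Fin n} (h2 : T' * T = 1) (hP : P.trace = 1)
    (h3 : (T * diagonal (ee i) * T') * P = P) (h4 : P * (T * diagonal (ee i) * T') = P) :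
    T * diagonal (ee i) * T' = P := by
  have e1 : ∀ M : Matrix (Fin n) (Fin n) ℂ, diagonal (ee i) * M * diagonal (ee i) = M i i • diagonal (ee i) := by
    intro M
    ext a c
    simp only [Matrix.mul_diagonal, Matrix.diagonal_mul, Matrix.smul_apply, ee_apply, diagonal_apply, smul_eq_mul]
    by_cases h1 : a = i <;> by_cases h2 : c = i
    · simp [h1, h2]
    · simp [h1, h2]
      intro h; exact absurd h.symm h2
    · simp [h1, h2]
    · simp [h1, h2]
  have h5 : P = (T' * P * T) i i • (T * diagonal (ee i) * T') := by
    calc P = (T * diagonal (ee i) * T') * P * (T * diagonal (ee i) * T') := by rw [h3, h4]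
      _ = T * (diagonal (ee i) * (T' * P * T) * diagonal (ee i)) * T' := by simp only [mul_assoc]
      _ = _ := by rw [e1, Matrix.mul_smul, Matrix.smul_mul]
  have h6 : (T * diagonal (ee i) * T').trace = 1 := by
    rw [Matrix.trace_mul_comm, ← mul_assoc, h2, one_mul, Matrix.trace_diagonal]
    simp [ee_apply]
  have h7 := congrArg Matrix.trace h5
  rw [Matrix.trace_smul, h6, hP, smul_eq_mul, mul_one] at h7
  rw [← h7, one_smul] at h5
  exact h5.symm

theorem colM_mul_rowM (i : Fin n) (x y : Fin n → ℂ) (a c : Fin n) : (colM i x * rowM i y) a c = x a * y c := by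
  simp [Matrix.mul_apply, colM_apply, rowM_apply]

theorem cancel_conj {T T' Y Z : Matrix (Fin n) (Fin n) ℂ} (h1 : T * T' = 1) (h : T' * Y * T = Z) : Y = T * Z * T' := by
  rw [← h]
  calc Y = (T * T') * Y * (T * T') := by rw [h1]; simp
    _ = _ := by simp only [mul_assoc]

theorem step_h (hn : 3 ≤ n) (hb : Monotone b) (h : SGood b φ) (hN : ∀ i j t, i ≠ j → b i ≤ b j → al φ i j t = t)
    {S S'} (hS : Fr b S S') (i : Fin n) : φ (S * diagonal (ee i) * S') = S * diagonal (ee i) * S' := by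
  obtain ⟨T, T', t1, t2, t3⟩ := frame (by omega) h.toHH hS
  obtain ⟨m, hm⟩ : ∃ m, S' i m * S m i ≠ 0 := by
    by_contra hc
    push Not at hc
    have := congrFun (congrFun hS.e2 i) i
    rw [Matrix.mul_apply, Finset.sum_eq_zero (fun k _ => hc k)] at this
    simp at this
  have hy0 : S' i m ≠ 0 := left_ne_zero_of_mul hm
  have hx0 : S m i ≠ 0 := right_ne_zero_of_mul hm
  have hval : ∀ {M : Matrix (Fin n) (Fin n) ℂ}, M ∈ blkSub b → ∀ {a c}, M a c ≠ 0 → b a ≤ b c := by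
    intro M hM a c hac
    by_contra hlt
    exact hac (hM (not_le.1 hlt))
  have b1 := hval hS.m1 hx0
  have b2 := hval hS.m2 hy0
  set x : Fin n → ℂ := fun a => S a i / S m i with hx
  set y : Fin n → ℂ := fun c => S' i c / S' i m with hy
  set w : Fin n → ℂ := fun c => S m c / S m i with hw
  set v : Fin n → ℂ := fun a => S' a m / S' i m with hv
  have X1 : S * rowM i w * S' = colM m x := by
    ext a c
    have h1 : ∀ k, (S * rowM i w) a k = S a i * w k := by
      intro k; simp [Matrix.mul_apply, rowM_apply]
    rw [Matrix.mul_apply]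
    simp only [h1]
    simp only [hw, colM_apply, hx]
    have h2 := congrFun (congrFun hS.e1 m) c
    rw [Matrix.mul_apply] at h2
    have : ∑ k, S a i * (S m k / S m i) * S' k c = S a i / S m i * ∑ k, S m k * S' k c := by
      rw [Finset.mul_sum]; apply Finset.sum_congr rfl; intro k _; ring
    rw [this, h2, Matrix.one_apply]
    by_cases hmc : c = m
    · simp [hmc]
    · simp [hmc, Ne.symm hmc]
  have X2 : S * colM i v * S' = rowM m y := by
    ext a c
    have h1 : ∀ k, (colM i v * S') k c = v k * S' i c := by
      intro k; simp [Matrix.mul_apply, colM_apply]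
    rw [mul_assoc, Matrix.mul_apply]
    simp only [h1]
    simp only [hv, rowM_apply, hy]
    have h2 := congrFun (congrFun hS.e1 a) m
    rw [Matrix.mul_apply] at h2
    have : ∑ k, S a k * (S' k m / S' i m * S' i c) = S' i c / S' i m * ∑ k, S a k * S' k m := by
      rw [Finset.mul_sum]; apply Finset.sum_congr rfl; intro k _; ring
    rw [this, h2, Matrix.one_apply]
    by_cases hmc : a = m
    · simp [hmc]
    · simp [hmc]
  have hxv : ∀ a, x a ≠ 0 → b a ≤ b m := fun a ha =>
    (hval hS.m1 (fun h0 => ha (by simp [hx, h0]))).trans b2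
  have hyv : ∀ a, y a ≠ 0 → b m ≤ b a := fun a ha =>
    b1.trans (hval hS.m2 (fun h0 => ha (by simp [hy, h0])))
  have hwv : ∀ a, w a ≠ 0 → b i ≤ b a := fun a ha =>
    b2.trans (hval hS.m1 (fun h0 => ha (by simp [hw, h0])))
  have hvv : ∀ a, v a ≠ 0 → b a ≤ b i := fun a ha =>
    (hval hS.m2 (fun h0 => ha (by simp [hv, h0]))).trans b1
  have fX1 : φ (colM m x) = colM m x := by
    obtain ⟨x', -, h2, h3⟩ := h.col1 hxv (by simp [hx, hx0])
    rw [h2, h3 hN]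
  have fX2 : φ (rowM m y) = rowM m y := by
    obtain ⟨x', -, h2, h3⟩ := h.row1 hyv (by simp [hy, hy0])
    rw [h2, h3 hN]
  have hP : S * diagonal (ee i) * S' = (S m i * S' i m) • (colM m x * rowM m y) := by
    ext a c
    rw [Matrix.smul_apply, colM_mul_rowM, Matrix.mul_apply, Finset.sum_eq_single i]
    · simp only [hx, hy, Matrix.mul_diagonal, ee_apply, smul_eq_mul]
      field_simp
      simp
    · intro k _ hk; simp [Matrix.mul_diagonal, ee_apply, hk]
    · simp
  have hR : diagonal (ee m) = (S m i * S' i m) • (rowM m y * colM m x) := by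
    ext a c
    rw [Matrix.smul_apply]
    have h2 := congrFun (congrFun hS.e2 i) i
    rw [Matrix.mul_apply, Matrix.one_apply_eq] at h2
    by_cases ha : a = m
    · by_cases hc : c = m
      · rw [ha, hc, rowM_mul_colM]
        have : y ⬝ᵥ x = (S' i m * S m i)⁻¹ * ∑ k, S' i k * S k i := by
          simp only [dotProduct, hx, hy, Finset.mul_sum]
          apply Finset.sum_congr rfl; intro k _; field_simp
        rw [this, h2]
        simp [ee_apply]
        field_simp
      · rw [Matrix.mul_apply]; simp [colM_apply, hc, diagonal_apply, ha, Ne.symm hc]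
    · rw [Matrix.mul_apply]; simp [rowM_apply, ha, diagonal_apply, ee_apply]
  have hPt : (S * diagonal (ee i) * S').trace = 1 := by
    rw [Matrix.trace_mul_comm, ← mul_assoc, hS.e2, one_mul, Matrix.trace_diagonal]
    simp [ee_apply]
  have hRt : (diagonal (ee m)).trace = 1 := by
    rw [Matrix.trace_diagonal]
    simp [ee_apply]
  have hG : Good b (fun X => T' * φ (S * X * S') * T) := by
    refine ⟨h.toHH.conj hS t1, ?_⟩
    intro d
    rw [t3]
    calc _ = (T' * T) * diagonal d * (T' * T) := by simp only [mul_assoc]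
      _ = _ := by rw [t2]; simp
  have TT : ∀ A B : Matrix (Fin n) (Fin n) ℂ, T * A * T' * (T * B * T') = T * (A * B) * T' := by
    intro A B
    calc T * A * T' * (T * B * T') = T * A * (T' * T) * B * T' := by simp only [mul_assoc]
      _ = _ := by rw [t2]; simp only [mul_one, mul_assoc]
  have hee : ee i i = 1 := by simp [ee_apply]
  rcases hG.dich hn hb with hs | hs
  · obtain ⟨w', -, h2, -⟩ := hs.row1 hwv (by simp [hw, hx0])
    obtain ⟨v', -, h3, -⟩ := hs.col1 hvv (by simp [hv, hy0])
    rw [X1, fX1] at h2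
    rw [X2, fX2] at h3
    have h2' := cancel_conj t1 h2
    have h3' := cancel_conj t1 h3
    have k1 : (T * diagonal (ee i) * T') * colM m x = colM m x := by
      rw [h2', TT, diag_mul_rowM, hee, one_smul]
    have k2 : rowM m y * (T * diagonal (ee i) * T') = rowM m y := by
      rw [h3', TT, colM_mul_diag, hee, one_smul]
    rw [t3]
    apply rk1 t2 hPt
    · rw [hP, Matrix.mul_smul, ← mul_assoc, k1]
    · rw [hP, Matrix.smul_mul, mul_assoc, k2]
  · obtain ⟨w', -, h2, -⟩ := hs.row1 hwv (by simp [hw, hx0])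
    obtain ⟨v', -, h3, -⟩ := hs.col1 hvv (by simp [hv, hy0])
    rw [X1, fX1] at h2
    rw [X2, fX2] at h3
    have tr1 : ∀ z, (rowM i z)ᵀ = colM i z := fun z => by ext a c; rfl
    have tr2 : ∀ z, (colM i z)ᵀ = rowM i z := fun z => by ext a c; rfl
    have h2 := congrArg Matrix.transpose h2
    have h3 := congrArg Matrix.transpose h3
    rw [Matrix.transpose_transpose, tr1] at h2
    rw [Matrix.transpose_transpose, tr2] at h3
    have h2' := cancel_conj t1 h2
    have h3' := cancel_conj t1 h3
    have k1 : colM m x * (T * diagonal (ee i) * T') = colM m x := by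
      rw [h2', TT, colM_mul_diag, hee, one_smul]
    have k2 : (T * diagonal (ee i) * T') * rowM m y = rowM m y := by
      rw [h3', TT, diag_mul_rowM, hee, one_smul]
    have hq : φ (S * diagonal (ee i) * S') = diagonal (ee m) := by
      rw [t3]
      apply rk1 t2 hRt
      · rw [hR, Matrix.mul_smul, ← mul_assoc, k2]
      · rw [hR, Matrix.smul_mul, mul_assoc, k1]
    have : S * diagonal (ee i) * S' = diagonal (ee m) := by
      apply h.inj (blk_mul (blk_mul hS.m1 (blk_diag _)) hS.m2) (blk_diag _)
      rw [hq, h.diag]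
    rw [hq, this]

theorem diag_sum (d : Fin n → ℂ) : diagonal d = ∑ i, d i • diagonal (ee i) := by
  ext a c
  rw [Matrix.sum_apply]
  simp only [Matrix.smul_apply, diagonal_apply, ee_apply, smul_eq_mul]
  by_cases h : a = c <;> simp [h]

theorem step_h2 (hn : 3 ≤ n) (hb : Monotone b) (h : SGood b φ) (hN : ∀ i j t, i ≠ j → b i ≤ b j → al φ i j t = t)
    {S S'} (hS : Fr b S S') (d : Fin n → ℂ) : φ (S * diagonal d * S') = S * diagonal d * S' := by
  obtain ⟨T, T', t1, t2, t3⟩ := frame (by omega) h.toHH hS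
  rw [t3, diag_sum d]
  simp only [Finset.mul_sum, Finset.sum_mul, Matrix.mul_smul, Matrix.smul_mul]
  apply Finset.sum_congr rfl
  intro i _
  rw [← t3, step_h hn hb h hN hS]

theorem exists_roots {ι : Type} [Fintype ι] (p : Polynomial ℂ) (hp : p.Monic) (hd : p.natDegree = Fintype.card ι) :
    ∃ f : ι → ℂ, p = ∏ i, (Polynomial.X - Polynomial.C (f i)) := by
  have hs := IsAlgClosed.splits p
  have hc : Fintype.card ι = Fintype.card p.roots := by
    rw [Multiset.card_coe, ← hs.natDegree_eq_card_roots, hd]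
  let e := Fintype.equivOfCardEq hc
  refine ⟨fun i => (e i : ℂ), ?_⟩
  conv_lhs => rw [hs.eq_prod_roots_of_monic hp]
  rw [Fintype.prod_equiv e _ (fun x : p.roots => Polynomial.X - Polynomial.C (x : ℂ)) (fun x => rfl)]
  rw [Finset.prod, ← Multiset.map_univ p.roots]

theorem exists_diag {X : Matrix (Fin n) (Fin n) ℂ} (hX : X ∈ blkSub b) (hs : X.charpoly.Separable) :
    ∃ S S', Fr b S S' ∧ ∃ d, X = S * diagonal d * S' := by
  have h1 : ∀ a, ∃ f : {m // b m = a} → ℂ, (X.toSquareBlock b a).charpoly = ∏ i, (Polynomial.X - Polynomial.C (f i)) := by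
    intro a
    apply exists_roots _ (Matrix.charpoly_monic _)
    rw [Matrix.charpoly_natDegree_eq_dim]
  choose f hf using h1
  let l : Fin n → ℂ := fun m => f (b m) ⟨m, rfl⟩
  have hl : ∀ a (i : {m // b m = a}), f a i = l i := by
    rintro a ⟨m, rfl⟩; rfl
  have hcp : X.charpoly = ∏ m, (Polynomial.X - Polynomial.C (l m)) := by
    rw [Matrix.BlockTriangular.charpoly X hX]
    rw [← Finset.prod_fiberwise_of_maps_to (g := b) (t := Finset.univ.image b) (fun i _ => Finset.mem_image_of_mem _ (Finset.mem_univ i))]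
    apply Finset.prod_congr rfl
    intro a _
    rw [hf]
    rw [Finset.prod_subtype (p := fun m => b m = a) (F := inferInstance)]
    · apply Finset.prod_congr rfl
      intro i _
      rw [hl]
    · intro x; simp
  have hli : Function.Injective l := by
    rw [hcp] at hs
    exact Polynomial.separable_prod_X_sub_C_iff.1 hs
  have h2 : ∀ m, ∃ v : Fin n → ℂ, v ≠ 0 ∧ X *ᵥ v = l m • v ∧ ∀ i, b m < b i → v i = 0 := by
    intro m
    let N : Matrix (Fin n) (Fin n) ℂ := scalar (Fin n) (l m) - X
    have hN : N.BlockTriangular b := (Matrix.blockTriangular_diagonal _).sub hX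
    let M : Matrix (Fin n) (Fin n) ℂ := Matrix.of fun i j => if b j ≤ b m then N i j else (1 : Matrix (Fin n) (Fin n) ℂ) i j
    have hM : M.BlockTriangular b := by
      intro i j hij
      simp only [M, Matrix.of_apply]
      split_ifs
      · exact hN hij
      · exact Matrix.blockTriangular_one hij
    have hdet : M.det = 0 := by
      rw [hM.det]
      apply Finset.prod_eq_zero (Finset.mem_image_of_mem b (Finset.mem_univ m))
      have : M.toSquareBlock b (b m) = scalar _ (l m) - X.toSquareBlock b (b m) := by
        ext i j
        simp only [M, Matrix.toSquareBlock_def, Matrix.of_apply, Matrix.sub_apply, N]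
        rw [if_pos j.2.le]
        simp [diagonal_apply, Subtype.ext_iff]
      rw [this, ← Matrix.eval_charpoly, hf, Polynomial.eval_prod]
      apply Finset.prod_eq_zero (Finset.mem_univ ⟨m, rfl⟩)
      simp [l]
    obtain ⟨v, hv0, hv⟩ := Matrix.exists_mulVec_eq_zero_iff.2 hdet
    have hsup : ∀ i, b m < b i → v i = 0 := by
      intro i hi
      have := congrFun hv i
      rw [Matrix.mulVec, dotProduct, Finset.sum_eq_single i] at this
      · simpa [M, not_le.2 hi] using this
      · intro j _ hji
        simp only [M, Matrix.of_apply]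
        split_ifs with hj
        · rw [hN (lt_of_le_of_lt hj hi), zero_mul]
        · rw [Matrix.one_apply_ne (Ne.symm hji), zero_mul]
      · simp
    refine ⟨v, hv0, ?_, hsup⟩
    have h3 : N *ᵥ v = 0 := by
      rw [← hv]
      ext i
      simp only [Matrix.mulVec, dotProduct]
      apply Finset.sum_congr rfl
      intro j _
      by_cases hj : b j ≤ b m
      · simp [M, hj]
      · rw [hsup j (not_le.1 hj)]; simp
    simp only [N] at h3
    rw [Matrix.sub_mulVec, sub_eq_zero] at h3
    rw [← h3]
    ext j
    simp
  choose v hv0 hv hvs using h2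
  let S : Matrix (Fin n) (Fin n) ℂ := Matrix.of fun i j => v j i
  obtain ⟨hu, he⟩ := diag_of_eigvec X l hli S (fun i => hv0 i) (fun i => hv i)
  have hSb : S.BlockTriangular b := fun i j hij => hvs j i hij
  have hud := (Matrix.isUnit_iff_isUnit_det _).1 hu
  have := Matrix.invertibleOfIsUnitDet S hud
  refine ⟨S, S⁻¹, ⟨hSb, Matrix.blockTriangular_inv_of_blockTriangular hSb, Matrix.mul_nonsing_inv _ hud,
    Matrix.nonsing_inv_mul _ hud⟩, l, ?_⟩
  rw [← he, mul_assoc, Matrix.mul_nonsing_inv _ hud, mul_one]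

theorem NGood.id (hn : 3 ≤ n) (hb : Monotone b) (h : SGood b φ) (hN : ∀ i j t, i ≠ j → b i ≤ b j → al φ i j t = t)
    {X} (hX : X ∈ blkSub b) : φ X = X := by
  have hL0 : dsc (diagonal (lam n)) ≠ 0 := (dsc_ne_zero_iff (by omega) _).2 ((sep_diag _).2 (lam_inj n))
  have hX' := dense_ne (blkSub b) (fun X => dsc X) dsc_line _ (blk_diag _) hL0 X hX
  have hc : ContinuousWithinAt φ {X | X ∈ blkSub b ∧ dsc X ≠ 0} X := (h.cont X hX).mono fun X hX => hX.1
  have : (𝓝[{X | X ∈ blkSub b ∧ dsc X ≠ 0}] X).NeBot := mem_closure_iff_nhdsWithin_neBot.1 hX'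
  refine tendsto_nhds_unique_of_eventuallyEq hc continuousWithinAt_id ?_
  filter_upwards [self_mem_nhdsWithin] with W hW
  obtain ⟨S, S', hS, d, hd⟩ := exists_diag hW.1 ((dsc_ne_zero_iff (by omega) _).1 hW.2)
  rw [hd, step_h2 hn hb h hN hS]; rfl

theorem HH.main (hn : 3 ≤ n) (hb : Monotone b) (h : HH b φ) :
    ∃ T T' : Matrix (Fin n) (Fin n) ℂ, T * T' = 1 ∧ T' * T = 1 ∧
      ((∀ X ∈ blkSub b, φ X = T * X * T') ∨ (∀ X ∈ blkSub b, φ X = T * Xᵀ * T')) := by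
  obtain ⟨T, T', t1, t2, t3⟩ := frame_one (by omega) h
  have hG : Good b (fun X => T' * φ X * T) := by
    refine ⟨by simpa using h.conj Fr.one t1, ?_⟩
    intro d
    rw [t3]
    calc _ = (T' * T) * diagonal d * (T' * T) := by simp only [mul_assoc]
      _ = _ := by rw [t2]; simp
  have fin : ∀ {ψ : Matrix (Fin n) (Fin n) ℂ → Matrix (Fin n) (Fin n) ℂ}, SGood b ψ → ∃ D D' : Matrix (Fin n) (Fin n) ℂ,
      D * D' = 1 ∧ D' * D = 1 ∧ ∀ X ∈ blkSub b, ψ X = D * X * D' := by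
    intro ψ hψ
    obtain ⟨C, hC, h1, h2⟩ := hψ.normalize hn hb
    have e1 : diagonal C * diagonal (fun i => (C i)⁻¹) = 1 := by
      rw [Matrix.diagonal_mul_diagonal, ← Matrix.diagonal_one]
      congr 1; funext i; exact mul_inv_cancel₀ (hC i)
    have e2 : diagonal (fun i => (C i)⁻¹) * diagonal C = 1 := by
      rw [Matrix.diagonal_mul_diagonal, ← Matrix.diagonal_one]
      congr 1; funext i; exact inv_mul_cancel₀ (hC i)
    refine ⟨_, _, e1, e2, fun X hX => ?_⟩
    exact cancel_conj e1 (NGood.id hn hb h1 h2 hX)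
  rcases hG.dich hn hb with hs | hs
  · obtain ⟨D, D', d1, d2, d3⟩ := fin hs
    refine ⟨T * D, D' * T', ?_, ?_, Or.inl fun X hX => ?_⟩
    · calc T * D * (D' * T') = T * (D * D') * T' := by simp only [mul_assoc]
        _ = 1 := by rw [d1, mul_one, t1]
    · calc D' * T' * (T * D) = D' * (T' * T) * D := by simp only [mul_assoc]
        _ = 1 := by rw [t2, mul_one, d2]
    · rw [cancel_conj t1 (d3 X hX)]; simp only [mul_assoc]
  · obtain ⟨D, D', d1, d2, d3⟩ := fin hs
    have d1' : D'ᵀ * Dᵀ = 1 := by rw [← Matrix.transpose_mul, d1, Matrix.transpose_one]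
    have d2' : Dᵀ * D'ᵀ = 1 := by rw [← Matrix.transpose_mul, d2, Matrix.transpose_one]
    refine ⟨T * D'ᵀ, Dᵀ * T', ?_, ?_, Or.inr fun X hX => ?_⟩
    · calc T * D'ᵀ * (Dᵀ * T') = T * (D'ᵀ * Dᵀ) * T' := by simp only [mul_assoc]
        _ = 1 := by rw [d1', mul_one, t1]
    · calc Dᵀ * T' * (T * D'ᵀ) = Dᵀ * (T' * T) * D'ᵀ := by simp only [mul_assoc]
        _ = 1 := by rw [t2, mul_one, d2']
    · have := congrArg Matrix.transpose (d3 X hX)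
      rw [Matrix.transpose_transpose, Matrix.transpose_mul, Matrix.transpose_mul] at this
      rw [cancel_conj t1 this]; simp only [mul_assoc]

end P7
end Part7


set_option linter.all false
section P8
variable {n : ℕ}

theorem exch_conj_apply (X : Matrix (Fin n) (Fin n) ℂ) (i j : Fin n) :
    (exchMat n * Xᵀ * exchMat n) i j = X (Fin.rev j) (Fin.rev i) := by
  have hL : ∀ (Y : Matrix (Fin n) (Fin n) ℂ) (a c : Fin n), (exchMat n * Y) a c = Y (Fin.rev a) c := by
    intro Y a c
    rw [Matrix.mul_apply, Finset.sum_eq_single (Fin.rev a)]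
    · have : (a : ℕ) + (Fin.rev a : ℕ) + 1 = n := by rw [Fin.val_rev]; omega
      simp only [exchMat, Matrix.of_apply, this, if_true, one_mul]
    · intro k _ hk
      have : ¬ ((a : ℕ) + (k : ℕ) + 1 = n) := by
        intro h; apply hk; apply Fin.ext; rw [Fin.val_rev]; omega
      simp only [exchMat, Matrix.of_apply, this, if_false, zero_mul]
    · simp
  have hJ : (exchMat n)ᵀ = exchMat n := by
    ext a c; simp only [exchMat, Matrix.transpose_apply, Matrix.of_apply, add_comm (a : ℕ)]
  have e : exchMat n * Xᵀ * exchMat n = (exchMat n * (exchMat n * Xᵀ)ᵀ)ᵀ := by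
    rw [Matrix.transpose_mul (exchMat n) (exchMat n * Xᵀ)ᵀ, Matrix.transpose_transpose, hJ]
  rw [e, Matrix.transpose_apply, hL, Matrix.transpose_apply, hL, Matrix.transpose_apply]

theorem exch_sq : exchMat n * exchMat n = 1 := by
  have h : exchMat n * (1 : Matrix (Fin n) (Fin n) ℂ)ᵀ * exchMat n = 1 := by
    ext i j
    rw [exch_conj_apply, Matrix.one_apply, Matrix.one_apply]
    by_cases hij : i = j
    · simp [hij]
    · have : Fin.rev j ≠ Fin.rev i := fun h => hij (Fin.rev_injective h).symm
      simp [hij, this]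
  simpa using h

/-- number of indices in strictly earlier blocks -/
def cntLt (b : Fin n → ℕ) (i : Fin n) : ℕ := (Finset.univ.filter (fun q => b q < b i)).card

theorem cntLt_mono_val {b : Fin n → ℕ} {i j : Fin n} (h : b i ≤ b j) : cntLt b i ≤ cntLt b j := by
  apply Finset.card_le_card
  intro q hq
  simp only [Finset.mem_filter, Finset.mem_univ, true_and] at hq ⊢
  omega

theorem cntLt_lt_iff {b : Fin n → ℕ} {i j : Fin n} : cntLt b i < cntLt b j ↔ b i < b j := by
  constructor
  · intro h
    by_contra hc
    exact absurd (cntLt_mono_val (not_lt.1 hc)) (not_le.2 h)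
  · intro h
    apply Finset.card_lt_card
    rw [Finset.ssubset_iff_of_subset]
    · exact ⟨i, by simpa using h, by simp⟩
    · intro q hq
      simp only [Finset.mem_filter, Finset.mem_univ, true_and] at hq ⊢
      omega

theorem card_le_of_support {T T' : Matrix (Fin n) (Fin n) ℂ} (h1 : T * T' = 1) (Q R : Finset (Fin n))
    (h : ∀ q ∈ Q, ∀ j, j ∉ R → T' j q = 0) : Q.card ≤ R.card := by
  let C : Matrix Q R ℂ := fun q r => T q r
  let B : Matrix R Q ℂ := fun r q => T' r q
  have hCB : C * B = 1 := by
    ext p q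
    have h2 := congrFun (congrFun h1 (p : Fin n)) (q : Fin n)
    rw [Matrix.mul_apply] at h2
    rw [Matrix.mul_apply]
    have h3 : ∑ r : R, C p r * B r q = ∑ r ∈ R, T p r * T' r q :=
      Finset.sum_coe_sort R (fun r => T p r * T' r q)
    rw [h3, Finset.sum_subset (Finset.subset_univ R) (fun x _ hx => by rw [h q q.2 x hx, mul_zero]), h2,
      Matrix.one_apply, Matrix.one_apply]
    simp only [Subtype.ext_iff]
  have h4 := Matrix.rank_mul_le_left C B
  rw [hCB, Matrix.rank_one, Fintype.card_coe] at h4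
  have h5 := Matrix.rank_le_card_width C
  rw [Fintype.card_coe] at h5
  exact h4.trans h5

theorem cnt_le_of_conj {b b' : Fin n → ℕ} {T T' : Matrix (Fin n) (Fin n) ℂ} (h1 : T * T' = 1)
    (h : ∀ X ∈ blkSub b', T * X * T' ∈ blkSub b) {p i : Fin n} (hp : T p i ≠ 0) :
    cntLt b p ≤ cntLt b' i := by
  apply card_le_of_support h1
  intro q hq j hj
  simp only [Finset.mem_filter, Finset.mem_univ, true_and, not_lt] at hq hj
  have hX : Matrix.single i j (1 : ℂ) ∈ blkSub b' := by
    intro a c hac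
    rw [Matrix.single_apply]
    rw [if_neg]
    rintro ⟨rfl, rfl⟩
    omega
  have h2 : (T * Matrix.single i j (1 : ℂ) * T') p q = 0 := h _ hX hq
  have h3 : (T * Matrix.single i j (1 : ℂ) * T') p q = T p i * T' j q := by
    rw [mul_assoc, Matrix.mul_apply, Finset.sum_eq_single i]
    · rw [Matrix.single_mul_apply_same, one_mul]
    · intro k _ hk
      rw [Matrix.single_mul_apply_of_ne _ _ _ _ _ hk, mul_zero]
    · simp
  rw [h3] at h2
  exact (mul_eq_zero.1 h2).resolve_left hp

theorem conj_mem {b : Fin n → ℕ} {T T' : Matrix (Fin n) (Fin n) ℂ} (h1 : T * T' = 1)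
    (h : ∀ X ∈ blkSub b, T * X * T' ∈ blkSub b) :
    T ∈ blkSub b ∧ IsUnit T.det ∧ T⁻¹ ∈ blkSub b ∧ T⁻¹ = T' := by
  have hT : T ∈ blkSub b := by
    intro p i hpi
    by_contra hne
    have := cnt_le_of_conj h1 h hne
    have := cntLt_lt_iff.2 hpi
    omega
  have hu : IsUnit T.det := Matrix.isUnit_det_of_right_inverse h1
  refine ⟨hT, hu, ?_, Matrix.inv_eq_right_inv h1⟩
  letI := Matrix.invertibleOfIsUnitDet T hu
  exact Matrix.blockTriangular_inv_of_blockTriangular hT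

theorem rev_lt_iff {b b' : Fin n → ℕ} (hb : Monotone b)
    (hb' : ∀ i j, b' i < b' j ↔ b (Fin.rev j) < b (Fin.rev i))
    {T T' : Matrix (Fin n) (Fin n) ℂ} (h1 : T * T' = 1)
    (h : ∀ X ∈ blkSub b', T * X * T' ∈ blkSub b) : ∀ i j, b i < b j ↔ b' i < b' j := by
  have hb'm : Monotone b' := by
    intro i j hij
    by_contra hc
    have := (hb' _ _).1 (not_le.1 hc)
    have := hb (Fin.rev_le_rev.2 hij)
    omega
  have hdet : T.det ≠ 0 := (Matrix.isUnit_det_of_right_inverse h1).ne_zero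
  rw [Matrix.det_apply] at hdet
  obtain ⟨σ, -, hσ⟩ := Finset.exists_ne_zero_of_sum_ne_zero hdet
  have hσ' : ∀ i, T (σ i) i ≠ 0 := by
    intro i h0
    apply hσ
    have h5 : ∏ i, T (σ i) i = 0 := Finset.prod_eq_zero (f := fun i => T (σ i) i) (Finset.mem_univ i) h0
    rw [h5, smul_zero]
  have hle : ∀ i, cntLt b (σ i) ≤ cntLt b' i := fun i => cnt_le_of_conj h1 h (hσ' i)
  have hsum : ∑ i, cntLt b (σ i) = ∑ i, cntLt b' i := by
    rw [Equiv.sum_comp σ (cntLt b)]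
    simp only [cntLt, Finset.card_filter, hb']
    rw [Finset.sum_comm]
    rw [← Equiv.sum_comp Fin.revPerm]
    apply Finset.sum_congr rfl
    intro i _
    rw [← Equiv.sum_comp Fin.revPerm]
    rfl
  have heq : ∀ i, cntLt b (σ i) = cntLt b' i := fun i =>
    (Finset.sum_eq_sum_iff_of_le (fun i _ => hle i)).1 hsum i (Finset.mem_univ i)
  have hm : Monotone (cntLt b) := fun i j hij => cntLt_mono_val (hb hij)
  have hm' : Monotone (cntLt b ∘ σ) := by
    intro i j hij
    simp only [Function.comp, heq]
    exact cntLt_mono_val (hb'm hij)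
  have key := Tuple.unique_monotone (f := cntLt b) (σ := σ) (τ := 1) hm' hm
  intro i j
  have k : ∀ i, cntLt b' i = cntLt b i := fun i => by
    rw [← heq]; exact congrFun key i
  rw [← cntLt_lt_iff (b := b), ← cntLt_lt_iff (b := b'), k, k]

theorem blockIdx_mono (k : List ℕ) : Monotone (blockIdx k) := by
  intro i j hij
  apply Finset.card_le_card
  intro s hs
  simp only [Finset.mem_filter] at hs ⊢
  exact ⟨hs.1, hs.2.trans hij⟩

end P8

theorem spectrum_shrinking_self_map {n : ℕ} (hn : 3 ≤ n) (𝒜 : Set (Matrix (Fin n) (Fin n) ℂ))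
    (h𝒜 : IsBlockUT n 𝒜)
    (φ : Matrix (Fin n) (Fin n) ℂ → Matrix (Fin n) (Fin n) ℂ)
    (hmaps : ∀ X ∈ 𝒜, φ X ∈ 𝒜)
    (hcont : ContinuousOn φ 𝒜)
    (hinj : Set.InjOn φ 𝒜)
    (hcomm : ∀ X ∈ 𝒜, ∀ Y ∈ 𝒜, X * Y = Y * X → φ X * φ Y = φ Y * φ X)
    (hspec : ∀ X ∈ 𝒜, spectrum ℂ (φ X) ⊆ spectrum ℂ X) :
    (∃ T ∈ 𝒜, IsUnit T.det ∧ T⁻¹ ∈ 𝒜 ∧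
      ∀ X ∈ 𝒜, φ X = T * X * T⁻¹) ∨
    ((fun X : Matrix (Fin n) (Fin n) ℂ => exchMat n * Xᵀ * exchMat n) '' 𝒜 = 𝒜 ∧
      ∃ T ∈ 𝒜, IsUnit T.det ∧ T⁻¹ ∈ 𝒜 ∧
        ∀ X ∈ 𝒜, φ X = T * (exchMat n * Xᵀ * exchMat n) * T⁻¹) := by
  obtain ⟨k, -, -, rfl⟩ := h𝒜
  let b : Fin n → ℕ := fun i => blockIdx k (i : ℕ)
  have hb : Monotone b := fun i j hij => blockIdx_mono k hij
  have hA : ∀ X, X ∈ blockAlg n k ↔ X ∈ blkSub b :=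
    fun X => ⟨fun h i j hij => h i j hij, fun h i j hij => h hij⟩
  have hset : blockAlg n k = (blkSub b : Set (Matrix (Fin n) (Fin n) ℂ)) := Set.ext hA
  rw [hset] at hcont hinj
  simp only [hA] at hmaps hcomm hspec ⊢
  have hH : HH b φ := ⟨hcont, hinj, hcomm, charpoly_preserved (by omega) b φ hmaps hcont hinj hspec⟩
  obtain ⟨T, T', h1, h2, h3 | h3⟩ := hH.main hn hb
  · left
    obtain ⟨m1, m2, m3, m4⟩ := conj_mem h1 (fun X hX => by rw [← h3 X hX]; exact hmaps X hX)
    exact ⟨T, m1, m2, m3, fun X hX => by rw [m4]; exact h3 X hX⟩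
  · right
    let N := ∑ i, b i
    have hN : ∀ i, b i ≤ N := fun i => Finset.single_le_sum (fun _ _ => Nat.zero_le _) (Finset.mem_univ i)
    let b' : Fin n → ℕ := fun i => N - b (Fin.rev i)
    have hb' : ∀ i j, b' i < b' j ↔ b (Fin.rev j) < b (Fin.rev i) := by
      intro i j
      have := hN (Fin.rev i)
      have := hN (Fin.rev j)
      simp only [b']
      omega
    have inv : ∀ X : Matrix (Fin n) (Fin n) ℂ,
        exchMat n * (exchMat n * Xᵀ * exchMat n)ᵀ * exchMat n = X := by
      intro X; ext i j
      rw [exch_conj_apply, exch_conj_apply, Fin.rev_rev, Fin.rev_rev]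
    have hsw : ∀ X ∈ blkSub b', exchMat n * Xᵀ * exchMat n ∈ blkSub b := by
      intro X hX i j hij
      rw [exch_conj_apply]
      apply hX
      rw [hb', Fin.rev_rev, Fin.rev_rev]
      exact hij
    have e1 : T * exchMat n * (exchMat n * T') = 1 := by
      rw [mul_assoc, ← mul_assoc (exchMat n), exch_sq, one_mul, h1]
    have e2 : ∀ X : Matrix (Fin n) (Fin n) ℂ,
        T * exchMat n * (exchMat n * Xᵀ * exchMat n) * (exchMat n * T') = T * Xᵀ * T' := by
      intro X
      calc T * exchMat n * (exchMat n * Xᵀ * exchMat n) * (exchMat n * T')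
          = T * (exchMat n * exchMat n) * Xᵀ * (exchMat n * exchMat n) * T' := by
            simp only [mul_assoc]
        _ = _ := by rw [exch_sq, mul_one, mul_one]
    have e3 : ∀ X ∈ blkSub b', T * exchMat n * X * (exchMat n * T') ∈ blkSub b := by
      intro X hX
      have := e2 (exchMat n * Xᵀ * exchMat n)
      rw [inv] at this
      rw [this, ← h3 _ (hsw X hX)]
      exact hmaps _ (hsw X hX)
    have hbb := rev_lt_iff hb hb' e1 e3
    have hmem : ∀ X, X ∈ blkSub b → X ∈ blkSub b' := fun X hX i j hij => hX ((hbb _ _).2 hij)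
    obtain ⟨m1, m2, m3, m4⟩ := conj_mem e1 (fun X hX => e3 X (hmem X hX))
    refine ⟨?_, T * exchMat n, m1, m2, m3, fun X hX => ?_⟩
    · rw [hset]
      ext X
      constructor
      · rintro ⟨Y, hY, rfl⟩
        exact hsw Y (hmem Y hY)
      · intro hX
        exact ⟨_, hsw X (hmem X hX), inv X⟩
    · rw [m4, e2]; exact h3 X hX
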